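/- Let ℓ ≥ 1 be a real number, let k be a positive integer, and let f : ℤ≥1 → ℝ≥0 be a positive arithmetic function such that f(mn) ≤ τ_k(m) f(n) for all positive integers m, n. Set A_k := 125^k · 1092/k^3, B_{k,ℓ} := (1/2) e^{4/e} k^{20ℓ}, C_{k,ℓ} := (10ℓ(k−1))^{k^{16ℓ}(k−1)}, D_{k,ℓ} := A_k · max(A_k, 2k^{5ℓA_k}) + (2A_k)^{−A_k/4} e^{B_{k,ℓ}/e} k^{5ℓB_{k,ℓ}} · δ + 5 where δ = 1 if A_k < B_{k,ℓ} and δ = 0 otherwise, and Λ(k,ℓ) := 12ℓ k^{6ℓ} + 5ℓ C_{k,ℓ} + 9ℓ D_{k,ℓ}. Then, uniformly for all real x ≥ exp(7^{28} (12eℓ)^{28 log(192eℓ)}) and all real y with x^{1/ℓ} ≤ y ≤ x, one has ∑_{x−y < n ≤ x} f(n) ≤ Λ(k,ℓ) · (y / log x) · ∑_{n ≤ x} f(n)/n. -/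

import Mathlib

/-- The `k`-fold Piltz divisor function: `piltz k n` is the number of ordered
`k`-tuples of positive integers whose product is `n` (Dirichlet `k`-th power of ζ). -/
def piltz (k n : ℕ) : ℕ := ((ArithmeticFunction.zeta : ArithmeticFunction ℕ) ^ k) n

noncomputable def Ak (k : ℕ) : ℝ := 125 ^ k * 1092 / k ^ 3

noncomputable def Bkl (k : ℕ) (ℓ : ℝ) : ℝ :=
  (1 / 2) * Real.exp (4 / Real.exp 1) * (k : ℝ) ^ (20 * ℓ)

noncomputable def Ckl (k : ℕ) (ℓ : ℝ) : ℝ :=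
  (10 * ℓ * ((k : ℝ) - 1)) ^ ((k : ℝ) ^ (16 * ℓ) * ((k : ℝ) - 1))

noncomputable def Dkl (k : ℕ) (ℓ : ℝ) : ℝ :=
  Ak k * max (Ak k) (2 * (k : ℝ) ^ (5 * ℓ * Ak k)) +
    (2 * Ak k) ^ (-(Ak k) / 4) * Real.exp (Bkl k ℓ / Real.exp 1) *
      (k : ℝ) ^ (5 * ℓ * Bkl k ℓ) * (if Ak k < Bkl k ℓ then 1 else 0) + 5

noncomputable def Lam (k : ℕ) (ℓ : ℝ) : ℝ :=
  12 * ℓ * (k : ℝ) ^ (6 * ℓ) + 5 * ℓ * Ckl k ℓ + 9 * ℓ * Dkl k ℓ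

/-
Put `Z = ⌊√y⌋`. Multiplying the prime factors of `n` in increasing order for as long as the product
stays at most `Z` factors `n` as `a * b`, where `a ≤ √y` and every prime factor of `a` is at most
the least prime factor `p` of `b` ("smooth part", "rough part" and "cut prime" below); moreover
`a * p > √y`. Then `f n ≤ τ_k b * f a`, and for fixed `a` the cofactors `b` lie in an interval of
length `y / a ≥ √y` and have no prime factor below `p`, so by Selberg's sieve there are
`≪ y / (a * log p)` of them.

If `log p` is comparable to `log y`, then `b` has boundedly many prime factors, so `τ_k b` is
bounded and the sieve bound alone suffices. Otherwise `p ≤ y ^ (1 / 4)`, so that `a > y ^ (1 / 4)`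
is `p`-smooth, and Rankin's trick saves a factor `exp (-K * s / 2)` when `log y` is about `s` times
`log p`; taking `K` about `4 * ℓ * log k` this beats `τ_k b ≤ k ^ (2 * ℓ * (s + 1))`. When `p` is
bounded in terms of `k` and `ℓ`, Rankin's trick saves a power of `y` which absorbs
`τ_k b ≪ x ^ (1 / (10 * ℓ))`.
-/

section Piltz

theorem multichoose_le_pow (k j : ℕ) : k.multichoose j ≤ k ^ j := by
  induction k generalizing j with
  | zero => cases j <;> simp
  | succ k ihk =>
    induction j with
    | zero => simp
    | succ j ihj =>
      calc (k + 1).multichoose (j + 1)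
          = k.multichoose (j + 1) + (k + 1).multichoose j := Nat.multichoose_succ_succ k j
        _ ≤ k ^ j * k + (k + 1) ^ j := add_le_add (ihk (j + 1)) ihj
        _ ≤ (k + 1) ^ j * k + (k + 1) ^ j := by gcongr; exact k.le_succ
        _ = (k + 1) ^ (j + 1) := by ring

theorem multichoose_le_succ_pow (k j : ℕ) : k.multichoose j ≤ (j + 1) ^ k := by
  induction k generalizing j with
  | zero => cases j <;> simp
  | succ k ihk =>
    induction j with
    | zero => simp
    | succ j ihj =>
      calc (k + 1).multichoose (j + 1)
          = k.multichoose (j + 1) + (k + 1).multichoose j := Nat.multichoose_succ_succ k j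
        _ ≤ (j + 2) ^ k + (j + 1) ^ k * (j + 1) := add_le_add (ihk (j + 1)) ihj
        _ ≤ (j + 2) ^ k + (j + 2) ^ k * (j + 1) := by gcongr; omega
        _ = (j + 1 + 1) ^ (k + 1) := by ring

theorem multichoose_succ_left (k j : ℕ) : (k + 1).multichoose j = (j + k).choose k := by
  rw [Nat.multichoose_eq, show k + 1 + j - 1 = j + k by omega, Nat.choose_symm_add]

theorem hasSum_multichoose_mul_pow (k : ℕ) {q : ℝ} (hq : |q| < 1) :
    HasSum (fun j => (k.multichoose j : ℝ) * q ^ j) ((1 - q)⁻¹ ^ k) := by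
  cases k with
  | zero =>
    rw [pow_zero]
    refine (hasSum_ite_eq 0 1).congr_fun fun j => ?_
    cases j <;> simp
  | succ k =>
    rw [inv_pow, ← one_div]
    simpa only [multichoose_succ_left] using hasSum_choose_mul_geometric_of_norm_lt_one k hq

theorem isMultiplicative_zeta_pow (k : ℕ) :
    ((ArithmeticFunction.zeta : ArithmeticFunction ℕ) ^ k).IsMultiplicative :=
  ArithmeticFunction.isMultiplicative_zeta.pow

theorem piltz_one_right (k : ℕ) : piltz k 1 = 1 := (isMultiplicative_zeta_pow k).1

theorem piltz_mul_of_coprime (k : ℕ) {m n : ℕ} (h : m.Coprime n) :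
    piltz k (m * n) = piltz k m * piltz k n :=
  (isMultiplicative_zeta_pow k).map_mul_of_coprime h

theorem piltz_prime_pow {p : ℕ} (hp : p.Prime) (k j : ℕ) :
    piltz k (p ^ j) = k.multichoose j := by
  induction k generalizing j with
  | zero => cases j <;> simp [piltz, hp.ne_one]
  | succ k ih =>
    calc piltz (k + 1) (p ^ j) = ∑ i ∈ Finset.range (j + 1), piltz k (p ^ i) := by
          rw [piltz, pow_succ, ArithmeticFunction.mul_zeta_apply, Nat.sum_divisors_prime_pow hp]
          rfl
      _ = (j + k).choose k := by simp only [ih, Nat.sum_range_multichoose]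
      _ = (k + 1).multichoose j := (multichoose_succ_left k j).symm

theorem piltz_eq_prod_multichoose (k : ℕ) {n : ℕ} (hn : n ≠ 0) :
    piltz k n = ∏ p ∈ n.primeFactors, k.multichoose (n.factorization p) := by
  rw [piltz, (isMultiplicative_zeta_pow k).multiplicative_factorization _ hn, Finsupp.prod]
  exact Finset.prod_congr rfl fun p hp => piltz_prime_pow (Nat.prime_of_mem_primeFactors hp) k _

theorem piltz_le_pow_cardFactors (k : ℕ) {n : ℕ} (hn : n ≠ 0) :
    piltz k n ≤ k ^ ArithmeticFunction.cardFactors n := by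
  rw [piltz_eq_prod_multichoose k hn, ArithmeticFunction.cardFactors_eq_sum_factorization,
    Finsupp.sum, ← Finset.prod_pow_eq_pow_sum]
  exact Finset.prod_le_prod' fun p _ => multichoose_le_pow k _

theorem multichoose_le_rpow_mul (k j : ℕ) {q ε : ℝ} (hq : 2 ≤ q) (hε : 0 < ε) (hε1 : ε ≤ 1) :
    (k.multichoose j : ℝ) ≤ (3 / 2 * k / ε) ^ k * (q ^ j) ^ ε := by
  obtain rfl | hk := k.eq_zero_or_pos
  · rw [pow_zero, one_mul]
    cases j with
    | zero => simp
    | succ j =>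
      rw [Nat.multichoose_zero_succ, Nat.cast_zero]
      positivity
  have hk' : (1 : ℝ) ≤ k := by exact_mod_cast hk
  have hlog : (2 : ℝ) / 3 ≤ Real.log q := by
    linarith [Real.log_two_gt_d9, Real.log_le_log two_pos hq]
  have hC : 1 ≤ 3 / 2 * k / ε := by
    rw [le_div_iff₀ hε]; linarith
  have key : (j : ℝ) + 1 ≤ 3 / 2 * k / ε * Real.exp (j * (ε / k) * Real.log q) := calc
    (j : ℝ) + 1 ≤ j * (3 / 2 * Real.log q) + 3 / 2 * k / ε := by
      gcongr
      exact le_mul_of_one_le_right (by positivity) (by linarith)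
    _ = 3 / 2 * k / ε * (j * (ε / k) * Real.log q + 1) := by field_simp
    _ ≤ 3 / 2 * k / ε * Real.exp (j * (ε / k) * Real.log q) := by
      gcongr
      exact Real.add_one_le_exp _
  calc (k.multichoose j : ℝ) ≤ ((j : ℝ) + 1) ^ k := by
        exact_mod_cast multichoose_le_succ_pow k j
    _ ≤ (3 / 2 * k / ε * Real.exp (j * (ε / k) * Real.log q)) ^ k := by gcongr
    _ = (3 / 2 * k / ε) ^ k * (q ^ j) ^ ε := by
        rw [mul_pow, ← Real.exp_nat_mul, Real.rpow_def_of_pos (by positivity), Real.log_pow]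
        congr 2
        field_simp

theorem multichoose_le_rpow (k j : ℕ) {q ε : ℝ} (hq : (k : ℝ) ^ (1 / ε) ≤ q) (hε : 0 < ε) :
    (k.multichoose j : ℝ) ≤ (q ^ j) ^ ε := by
  have hq0 : 0 ≤ q := le_trans (by positivity) hq
  calc (k.multichoose j : ℝ) ≤ (k : ℝ) ^ j := by exact_mod_cast multichoose_le_pow k j
    _ = (((k : ℝ) ^ (1 / ε)) ^ ε) ^ j := by
        rw [← Real.rpow_mul (by positivity), one_div_mul_cancel hε.ne', Real.rpow_one]
    _ ≤ (q ^ ε) ^ j := by gcongr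
    _ = (q ^ j) ^ ε := Real.rpow_pow_comm hq0 ε j

-- Only the primes `p < k ^ (1 / ε)` cost a factor; for the others `k ^ j ≤ (p ^ j) ^ ε`.
theorem piltz_le_rpow_mul {k n : ℕ} (hk : 0 < k) (hn : n ≠ 0) {ε : ℝ} (hε : 0 < ε)
    (hε1 : ε ≤ 1) :
    (piltz k n : ℝ) ≤ (3 / 2 * k / ε) ^ (k * (k : ℝ) ^ (1 / ε)) * (n : ℝ) ^ ε := by
  set C : ℝ := 3 / 2 * k / ε
  set P : ℝ := (k : ℝ) ^ (1 / ε)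
  have hC : 1 ≤ C := by
    have : (1 : ℝ) ≤ k := by exact_mod_cast hk
    rw [one_le_div hε]; linarith
  have hP : 0 ≤ P := by positivity
  have hfactor : ∀ p ∈ n.primeFactors, (k.multichoose (n.factorization p) : ℝ) ≤
      (if p ≤ ⌊P⌋₊ then C ^ k else 1) * ((p : ℝ) ^ n.factorization p) ^ ε := by
    intro p hp
    split_ifs with h
    · have hp2 : (2 : ℝ) ≤ p := by exact_mod_cast (Nat.prime_of_mem_primeFactors hp).two_le
      exact multichoose_le_rpow_mul k _ hp2 hε hε1
    · rw [one_mul]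
      exact multichoose_le_rpow k _ (Nat.lt_of_floor_lt (not_le.mp h)).le hε
  have hcard : {p ∈ n.primeFactors | p ≤ ⌊P⌋₊}.card ≤ ⌊P⌋₊ := by
    refine (Finset.card_le_card (t := Finset.Ioc 0 ⌊P⌋₊) fun p hp => ?_).trans (by simp)
    rw [Finset.mem_filter] at hp
    exact Finset.mem_Ioc.mpr ⟨Nat.pos_of_mem_primeFactors hp.1, hp.2⟩
  have hprod : ∏ p ∈ n.primeFactors, (if p ≤ ⌊P⌋₊ then C ^ k else 1) ≤ C ^ (k * P) := by
    rw [Finset.prod_ite, Finset.prod_const, Finset.prod_const_one, mul_one, ← pow_mul,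
      ← Real.rpow_natCast]
    refine Real.rpow_le_rpow_of_exponent_le hC ?_
    push_cast
    gcongr
    exact (Nat.le_floor_iff hP).mp hcard
  have hn_eq : ∏ p ∈ n.primeFactors, (p : ℝ) ^ n.factorization p = n := by
    exact_mod_cast Nat.prod_factorization_pow_eq_self hn
  calc (piltz k n : ℝ) = ∏ p ∈ n.primeFactors, (k.multichoose (n.factorization p) : ℝ) := by
        rw [piltz_eq_prod_multichoose k hn, Nat.cast_prod]
    _ ≤ ∏ p ∈ n.primeFactors,
          (if p ≤ ⌊P⌋₊ then C ^ k else 1) * ((p : ℝ) ^ n.factorization p) ^ ε :=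
        Finset.prod_le_prod (fun _ _ => by positivity) hfactor
    _ = (∏ p ∈ n.primeFactors, (if p ≤ ⌊P⌋₊ then C ^ k else 1)) * (n : ℝ) ^ ε := by
        rw [Finset.prod_mul_distrib, Real.finsetProd_rpow _ _ (fun _ _ => by positivity), hn_eq]
    _ ≤ C ^ (k * P) * (n : ℝ) ^ ε := by gcongr

end Piltz

section Mertens

open Finset

theorem sum_log_primeFactors_le {n : ℕ} (hn : n ≠ 0) :
    ∑ p ∈ n.primeFactors, Real.log p ≤ Real.log n := by
  have hpos : ∀ p ∈ n.primeFactors, (p : ℝ) ≠ 0 := fun p hp =>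
    Nat.cast_ne_zero.mpr (Nat.prime_of_mem_primeFactors hp).ne_zero
  rw [← Real.log_prod hpos, ← Nat.cast_prod]
  refine Real.log_le_log ?_ ?_
  · exact_mod_cast prod_pos fun p hp => (Nat.prime_of_mem_primeFactors hp).pos
  · exact_mod_cast Nat.le_of_dvd (Nat.pos_of_ne_zero hn) (Nat.prod_primeFactors_dvd n)

theorem sum_div_mul_log_prime_le (N : ℕ) :
    ∑ p ∈ N.primesLE, ((N / p : ℕ) : ℝ) * Real.log p ≤ N * Real.log N := by
  have hterm : ∀ n ∈ Ioc 0 N,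
      ∑ p ∈ N.primesLE, (if p ∣ n then Real.log p else 0) ≤ Real.log N := by
    intro n hn
    obtain ⟨hn0, hnN⟩ := mem_Ioc.mp hn
    have hprimes : {p ∈ N.primesLE | p ∣ n} ⊆ n.primeFactors := fun p hp => by
      rw [mem_filter, Nat.mem_primesLE] at hp
      exact Nat.mem_primeFactors.mpr ⟨hp.1.2, hp.2, hn0.ne'⟩
    calc ∑ p ∈ N.primesLE, (if p ∣ n then Real.log p else 0)
        = ∑ p ∈ N.primesLE with p ∣ n, Real.log p := (sum_filter _ _).symm
      _ ≤ ∑ p ∈ n.primeFactors, Real.log p :=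
          sum_le_sum_of_subset_of_nonneg hprimes fun p _ _ => Real.log_natCast_nonneg p
      _ ≤ Real.log n := sum_log_primeFactors_le hn0.ne'
      _ ≤ Real.log N := Real.log_le_log (by exact_mod_cast hn0) (by exact_mod_cast hnN)
  calc ∑ p ∈ N.primesLE, ((N / p : ℕ) : ℝ) * Real.log p
      = ∑ p ∈ N.primesLE, ∑ n ∈ Ioc 0 N, (if p ∣ n then Real.log p else 0) := by
        refine sum_congr rfl fun p _ => ?_
        rw [← sum_filter, sum_const, nsmul_eq_mul, Nat.Ioc_filter_dvd_card_eq_div]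
    _ = ∑ n ∈ Ioc 0 N, ∑ p ∈ N.primesLE, (if p ∣ n then Real.log p else 0) := sum_comm
    _ ≤ N * Real.log N := by simpa using sum_le_card_nsmul _ _ _ hterm

theorem sum_log_prime_div_le (N : ℕ) :
    ∑ p ∈ N.primesLE, Real.log p / p ≤ Real.log N + Real.log 4 := by
  obtain rfl | hN := N.eq_zero_or_pos
  · simpa using Real.log_nonneg (by norm_num : (1 : ℝ) ≤ 4)
  have hN0 : (0 : ℝ) < N := by exact_mod_cast hN
  have htheta : ∑ p ∈ N.primesLE, Real.log p ≤ Real.log 4 * N := by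
    rw [← Chebyshev.theta_eq_sum_primesLE_log]
    exact Chebyshev.theta_le_log4_mul_x hN0.le
  refine le_of_mul_le_mul_left ?_ hN0
  calc N * ∑ p ∈ N.primesLE, Real.log p / p = ∑ p ∈ N.primesLE, (N / p : ℝ) * Real.log p := by
        rw [mul_sum]
        exact sum_congr rfl fun p _ => by ring
    _ ≤ ∑ p ∈ N.primesLE, (((N / p : ℕ) : ℝ) + 1) * Real.log p := by
        refine sum_le_sum fun p _ => mul_le_mul_of_nonneg_right ?_ (Real.log_natCast_nonneg p)
        rw [← Nat.floor_div_eq_div (K := ℝ)]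
        exact (Nat.lt_floor_add_one _).le
    _ = ∑ p ∈ N.primesLE, ((N / p : ℕ) : ℝ) * Real.log p + ∑ p ∈ N.primesLE, Real.log p := by
        simp only [add_mul, one_mul, sum_add_distrib]
    _ ≤ N * (Real.log N + Real.log 4) := by linarith [sum_div_mul_log_prime_le N]

theorem sum_inv_sq_le_two (N : ℕ) : ∑ b ∈ Ioc 0 N, ((b : ℝ) ^ 2)⁻¹ ≤ 2 := by
  obtain rfl | hN := N.eq_zero_or_pos
  · simp
  have htail := sum_Ioc_inv_sq_le_sub (α := ℝ) one_ne_zero hN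
  have hinv : (0 : ℝ) ≤ (N : ℝ)⁻¹ := by positivity
  rw [← sum_Ioc_consecutive _ zero_le_one hN]
  rw [show Ioc 0 1 = {1} from rfl, sum_singleton]
  norm_num at htail ⊢
  linarith

theorem sum_inv_le_sum_inv_sq_mul_sum_squarefree_inv (N : ℕ) :
    ∑ n ∈ Ioc 0 N, (n : ℝ)⁻¹ ≤
      (∑ b ∈ Ioc 0 N, ((b : ℝ) ^ 2)⁻¹) * ∑ a ∈ Ioc 0 N with Squarefree a, (a : ℝ)⁻¹ := by
  set T := Ioc 0 N ×ˢ {a ∈ Ioc 0 N | Squarefree a}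
  have hcover : Ioc 0 N ⊆ T.image fun q : ℕ × ℕ => q.1 ^ 2 * q.2 := by
    intro n hn
    obtain ⟨a, b, rfl, ha⟩ := Nat.sq_mul_squarefree n
    obtain ⟨hpos, hle⟩ := mem_Ioc.mp hn
    have ha0 : 0 < a := Nat.pos_of_mul_pos_left hpos
    have hb : 0 < b ^ 2 := Nat.pos_of_mul_pos_right hpos
    have hb0 : 0 < b := Nat.pos_of_ne_zero (ne_zero_pow two_ne_zero hb.ne')
    have hbN : b ≤ b ^ 2 * a :=
      (Nat.le_self_pow two_ne_zero b).trans (Nat.le_mul_of_pos_right _ ha0)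
    have haN : a ≤ b ^ 2 * a := Nat.le_mul_of_pos_left _ hb
    refine mem_image.mpr ⟨(b, a), mem_product.mpr ⟨?_, mem_filter.mpr ⟨?_, ha⟩⟩, rfl⟩
    · exact mem_Ioc.mpr ⟨hb0, hbN.trans hle⟩
    · exact mem_Ioc.mpr ⟨ha0, haN.trans hle⟩
  calc ∑ n ∈ Ioc 0 N, (n : ℝ)⁻¹ ≤ ∑ n ∈ T.image (fun q : ℕ × ℕ => q.1 ^ 2 * q.2), (n : ℝ)⁻¹ :=
        sum_le_sum_of_subset_of_nonneg hcover fun _ _ _ => by positivity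
    _ ≤ ∑ q ∈ T, ((q.1 ^ 2 * q.2 : ℕ) : ℝ)⁻¹ := sum_image_le_of_nonneg (by intros; positivity)
    _ = _ := by
        rw [sum_mul_sum, ← sum_product']
        exact sum_congr rfl fun q _ => by push_cast; rw [mul_inv]

theorem log_add_one_le_two_mul_sum_squarefree_inv (N : ℕ) :
    Real.log (N + 1) ≤ 2 * ∑ a ∈ Ioc 0 N with Squarefree a, (a : ℝ)⁻¹ := calc
  Real.log (N + 1) ≤ ∑ n ∈ Ioc 0 N, (n : ℝ)⁻¹ := by
    have h := log_add_one_le_harmonic N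
    rw [harmonic_eq_sum_Icc] at h
    push_cast at h
    exact h
  _ ≤ _ := sum_inv_le_sum_inv_sq_mul_sum_squarefree_inv N
  _ ≤ _ := by
    gcongr
    exact sum_inv_sq_le_two N

end Mertens

section Sieve

open Finset ArithmeticFunction
open scoped ArithmeticFunction.Moebius

/-- The normalising sum `∑ g(l)` of Selberg's sieve, over the `l ∣ s.prodPrimes` up to the
level `N`. -/
noncomputable def selbergSum (s : BoundingSieve) (N : ℕ) : ℝ :=
  ∑ l ∈ s.prodPrimes.divisors with l ≤ N, s.selbergTerms l

/-- Selberg's choice of the weights of the `Λ²` sieve at level `N`; they vanish beyond `N`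
and minimise the main term. -/
noncomputable def selbergWeight (s : BoundingSieve) (N d : ℕ) : ℝ :=
  μ d / (s.nu d * selbergSum s N) *
    ∑ l ∈ s.prodPrimes.divisors with l ≤ N ∧ d ∣ l, s.selbergTerms l

theorem sum_moebius_of_dvd_of_squarefree {m e : ℕ} (he : Squarefree e) (hme : m ∣ e) :
    ∑ d ∈ e.divisors with m ∣ d, μ d = if m = e then μ m else 0 := by
  obtain ⟨c, rfl⟩ := hme
  obtain ⟨hm0, hc0⟩ : m ≠ 0 ∧ c ≠ 0 := mul_ne_zero_iff.mp he.ne_zero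
  have hmultiples : {d ∈ (m * c).divisors | m ∣ d} = c.divisors.image (m * ·) := by
    ext d
    simp only [mem_filter, Nat.mem_divisors, mem_image]
    constructor
    · rintro ⟨⟨hd, -⟩, t, rfl⟩
      exact ⟨t, ⟨(mul_dvd_mul_iff_left hm0).mp hd, hc0⟩, rfl⟩
    · rintro ⟨t, ⟨ht, -⟩, rfl⟩
      exact ⟨⟨mul_dvd_mul_left m ht, he.ne_zero⟩, dvd_mul_right m t⟩
  have hcop : m.Coprime c := (Nat.squarefree_mul_iff.mp he).1
  calc ∑ d ∈ (m * c).divisors with m ∣ d, μ d = ∑ t ∈ c.divisors, μ (m * t) := by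
        rw [hmultiples, sum_image fun _ _ _ _ => Nat.eq_of_mul_eq_mul_left (Nat.pos_of_ne_zero hm0)]
    _ = ∑ t ∈ c.divisors, μ m * μ t := sum_congr rfl fun t ht =>
        isMultiplicative_moebius.map_mul_of_coprime
          (hcop.coprime_dvd_right (Nat.dvd_of_mem_divisors ht))
    _ = μ m * if c = 1 then 1 else 0 := by
        rw [← mul_sum, ← coe_mul_zeta_apply, moebius_mul_coe_zeta, one_apply]
    _ = if m = m * c then μ m else 0 := by simp [hm0]

theorem abs_lambdaSquared_le (w : ℕ → ℝ) {d P : ℕ} (hP : P ≠ 0) (hd : d ∣ P) :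
    |BoundingSieve.lambdaSquared w d| ≤
      ∑ d₁ ∈ P.divisors, ∑ d₂ ∈ P.divisors, if d = d₁.lcm d₂ then |w d₁| * |w d₂| else 0 := by
  have hsub : d.divisors ⊆ P.divisors := Nat.divisors_subset_of_dvd hP hd
  have hnonneg (d₁ d₂ : ℕ) : 0 ≤ if d = d₁.lcm d₂ then |w d₁| * |w d₂| else 0 := by
    split_ifs <;> positivity
  calc |BoundingSieve.lambdaSquared w d|
      ≤ ∑ d₁ ∈ d.divisors, ∑ d₂ ∈ d.divisors, |if d = d₁.lcm d₂ then w d₁ * w d₂ else 0| :=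
        (abs_sum_le_sum_abs _ _).trans (sum_le_sum fun _ _ => abs_sum_le_sum_abs _ _)
    _ = ∑ d₁ ∈ d.divisors, ∑ d₂ ∈ d.divisors,
          if d = d₁.lcm d₂ then |w d₁| * |w d₂| else 0 := by
        simp only [apply_ite abs, abs_mul, abs_zero]
    _ ≤ ∑ d₁ ∈ d.divisors, ∑ d₂ ∈ P.divisors, if d = d₁.lcm d₂ then |w d₁| * |w d₂| else 0 :=
        sum_le_sum fun d₁ _ => sum_le_sum_of_subset_of_nonneg hsub fun d₂ _ _ => hnonneg d₁ d₂
    _ ≤ ∑ d₁ ∈ P.divisors, ∑ d₂ ∈ P.divisors, if d = d₁.lcm d₂ then |w d₁| * |w d₂| else 0 :=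
        sum_le_sum_of_subset_of_nonneg hsub fun d₁ _ _ => sum_nonneg fun d₂ _ => hnonneg d₁ d₂

section SelbergWeights

variable {s : BoundingSieve} {N : ℕ}

theorem selbergTerms_nonneg {l : ℕ} (hl : l ∈ s.prodPrimes.divisors) : 0 ≤ s.selbergTerms l :=
  (BoundingSieve.selbergTerms_pos (Nat.dvd_of_mem_divisors hl)).le

theorem nu_le_selbergTerms {l : ℕ} (hl : l ∣ s.prodPrimes) : s.nu l ≤ s.selbergTerms l := by
  rw [BoundingSieve.selbergTerms_apply]
  refine le_mul_of_one_le_right (BoundingSieve.nu_pos_of_dvd_prodPrimes hl).le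
    (one_le_prod fun p hp => ?_)
  have hp' := Nat.prime_of_mem_primeFactors hp
  have hpP := (Nat.dvd_of_mem_primeFactors hp).trans hl
  exact (one_le_inv₀ (sub_pos.mpr (s.nu_lt_one_of_prime p hp' hpP))).mpr
    (by linarith [s.nu_pos_of_prime p hp' hpP])

theorem one_le_selbergSum (hN : 1 ≤ N) : 1 ≤ selbergSum s N := by
  have hone : s.selbergTerms 1 = 1 := BoundingSieve.selbergTerms_isMultiplicative.map_one
  rw [← hone]
  refine single_le_sum (fun l hl => selbergTerms_nonneg (mem_filter.mp hl).1) ?_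
  exact mem_filter.mpr ⟨Nat.one_mem_divisors.mpr BoundingSieve.prodPrimes_ne_zero, hN⟩

theorem selbergWeight_one (hN : 1 ≤ N) : selbergWeight s N 1 = 1 := by
  have hS : selbergSum s N ≠ 0 := (one_pos.trans_le (one_le_selbergSum hN)).ne'
  simp only [selbergWeight, one_dvd, and_true, moebius_apply_one, Int.cast_one, s.nu_mult.map_one,
    one_mul]
  exact one_div_mul_cancel hS

theorem selbergWeight_eq_zero {d : ℕ} (hd : N < d) : selbergWeight s N d = 0 := by
  rw [selbergWeight, filter_false_of_mem, sum_empty, mul_zero]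
  rintro l hl ⟨hlN, hdl⟩
  exact absurd (Nat.le_of_dvd (Nat.pos_of_mem_divisors hl) hdl) (by omega)

theorem abs_selbergWeight_le (hN : 1 ≤ N) {d : ℕ} (hd : d ∣ s.prodPrimes) :
    |selbergWeight s N d| ≤ (s.nu d)⁻¹ := by
  have hS : 0 < selbergSum s N := one_pos.trans_le (one_le_selbergSum hN)
  have hν : 0 < s.nu d := BoundingSieve.nu_pos_of_dvd_prodPrimes hd
  have hμ : |(μ d : ℝ)| ≤ 1 := by exact_mod_cast abs_moebius_le_one
  set T := ∑ l ∈ s.prodPrimes.divisors with l ≤ N ∧ d ∣ l, s.selbergTerms l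
  have hT0 : 0 ≤ T := sum_nonneg fun l hl => selbergTerms_nonneg (mem_filter.mp hl).1
  have hT : T ≤ selbergSum s N :=
    sum_le_sum_of_subset_of_nonneg (monotone_filter_right _ fun _ _ h => h.1)
      fun l hl _ => selbergTerms_nonneg (mem_filter.mp hl).1
  calc |selbergWeight s N d| = |(μ d : ℝ)| / (s.nu d * selbergSum s N) * T := by
        rw [selbergWeight, abs_mul, abs_div, abs_of_pos (mul_pos hν hS), abs_of_nonneg hT0]
    _ ≤ 1 / (s.nu d * selbergSum s N) * selbergSum s N := by gcongr
    _ = (s.nu d)⁻¹ := by field_simp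

theorem sum_nu_mul_selbergWeight {l : ℕ} (hl : l ∣ s.prodPrimes) :
    ∑ d ∈ s.prodPrimes.divisors, (if l ∣ d then s.nu d * selbergWeight s N d else 0) =
      if l ≤ N then μ l * s.selbergTerms l / selbergSum s N else 0 := by
  have hP0 : s.prodPrimes ≠ 0 := BoundingSieve.prodPrimes_ne_zero
  calc ∑ d ∈ s.prodPrimes.divisors, (if l ∣ d then s.nu d * selbergWeight s N d else 0)
      = ∑ d ∈ s.prodPrimes.divisors with l ∣ d,
          ∑ e ∈ s.prodPrimes.divisors with e ≤ N ∧ d ∣ e,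
            (μ d : ℝ) * (s.selbergTerms e / selbergSum s N) := by
        rw [← sum_filter]
        refine sum_congr rfl fun d hd => ?_
        have hν : s.nu d ≠ 0 :=
          BoundingSieve.nu_ne_zero (Nat.dvd_of_mem_divisors (mem_filter.mp hd).1)
        rw [selbergWeight, ← mul_sum, ← sum_div]
        field_simp
    _ = ∑ e ∈ s.prodPrimes.divisors with e ≤ N, ∑ d ∈ e.divisors with l ∣ d,
          (μ d : ℝ) * (s.selbergTerms e / selbergSum s N) := by
        refine sum_comm' fun d e => ?_
        simp only [mem_filter, Nat.mem_divisors]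
        constructor
        · rintro ⟨⟨⟨-, -⟩, hld⟩, ⟨heP, -⟩, heN, hde⟩
          exact ⟨⟨⟨hde, ne_zero_of_dvd_ne_zero hP0 heP⟩, hld⟩, ⟨heP, hP0⟩, heN⟩
        · rintro ⟨⟨⟨hde, -⟩, hld⟩, ⟨heP, -⟩, heN⟩
          exact ⟨⟨⟨hde.trans heP, hP0⟩, hld⟩, ⟨heP, hP0⟩, heN, hde⟩
    _ = ∑ e ∈ s.prodPrimes.divisors with e ≤ N,
          (if l = e then (μ l : ℝ) else 0) * (s.selbergTerms e / selbergSum s N) := by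
        refine sum_congr rfl fun e he => ?_
        rw [← sum_mul]
        congr 1
        by_cases hle : l ∣ e
        · exact_mod_cast sum_moebius_of_dvd_of_squarefree
            (BoundingSieve.squarefree_of_mem_divisors_prodPrimes (mem_filter.mp he).1) hle
        · rw [filter_false_of_mem fun d hd h => hle (h.trans (Nat.dvd_of_mem_divisors hd)),
            sum_empty, if_neg fun h : l = e => hle h.dvd]
    _ = _ := by
        simp only [ite_mul, zero_mul, sum_ite_eq, mem_filter, Nat.mem_divisors, hl, hP0, ne_eq,
          not_false_eq_true, true_and, mul_div_assoc]

theorem mainSum_lambdaSquared_selbergWeight (hN : 1 ≤ N) :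
    s.mainSum (BoundingSieve.lambdaSquared (selbergWeight s N)) = (selbergSum s N)⁻¹ := by
  have hS : selbergSum s N ≠ 0 := (one_pos.trans_le (one_le_selbergSum hN)).ne'
  rw [BoundingSieve.mainSum_lambdaSquared_eq_sum_mul_sum_sq]
  calc ∑ l ∈ s.prodPrimes.divisors, (s.selbergTerms l)⁻¹ *
        (∑ d ∈ s.prodPrimes.divisors, if l ∣ d then s.nu d * selbergWeight s N d else 0) ^ 2
      = ∑ l ∈ s.prodPrimes.divisors,
          if l ≤ N then s.selbergTerms l / selbergSum s N ^ 2 else 0 := by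
        refine sum_congr rfl fun l hl => ?_
        have hlP := Nat.dvd_of_mem_divisors hl
        have hg : s.selbergTerms l ≠ 0 := (BoundingSieve.selbergTerms_pos hlP).ne'
        have hμ : (μ l : ℝ) ^ 2 = 1 := by
          exact_mod_cast moebius_sq_eq_one_of_squarefree
            (BoundingSieve.squarefree_of_dvd_prodPrimes hlP)
        rw [sum_nu_mul_selbergWeight hlP]
        split_ifs
        · field_simp
          exact hμ
        · simp
    _ = selbergSum s N / selbergSum s N ^ 2 := by rw [← sum_filter, ← sum_div, ← selbergSum]
    _ = (selbergSum s N)⁻¹ := by field_simp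

theorem errSum_lambdaSquared_le (w : ℕ → ℝ) (hrem : ∀ d, d ∣ s.prodPrimes → |s.rem d| ≤ 1) :
    s.errSum (BoundingSieve.lambdaSquared w) ≤ (∑ d ∈ s.prodPrimes.divisors, |w d|) ^ 2 := by
  have hP0 : s.prodPrimes ≠ 0 := BoundingSieve.prodPrimes_ne_zero
  calc s.errSum (BoundingSieve.lambdaSquared w)
      ≤ ∑ d ∈ s.prodPrimes.divisors, |BoundingSieve.lambdaSquared w d| := sum_le_sum fun d hd =>
        mul_le_of_le_one_right (abs_nonneg _) (hrem d (Nat.dvd_of_mem_divisors hd))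
    _ ≤ ∑ d ∈ s.prodPrimes.divisors, ∑ d₁ ∈ s.prodPrimes.divisors, ∑ d₂ ∈ s.prodPrimes.divisors,
          if d = d₁.lcm d₂ then |w d₁| * |w d₂| else 0 :=
        sum_le_sum fun d hd => abs_lambdaSquared_le w hP0 (Nat.dvd_of_mem_divisors hd)
    _ = ∑ d₁ ∈ s.prodPrimes.divisors, ∑ d₂ ∈ s.prodPrimes.divisors, |w d₁| * |w d₂| := by
        rw [sum_comm]
        refine sum_congr rfl fun d₁ hd₁ => ?_
        rw [sum_comm]
        refine sum_congr rfl fun d₂ hd₂ => ?_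
        rw [sum_ite_eq', if_pos (Nat.mem_divisors.mpr ⟨Nat.lcm_dvd (Nat.dvd_of_mem_divisors hd₁)
          (Nat.dvd_of_mem_divisors hd₂), hP0⟩)]
    _ = (∑ d ∈ s.prodPrimes.divisors, |w d|) ^ 2 := by rw [sq, sum_mul_sum]

theorem siftedSum_le_div_selbergSum_add_sq (hN : 1 ≤ N)
    (hrem : ∀ d, d ∣ s.prodPrimes → |s.rem d| ≤ 1) :
    s.siftedSum ≤ s.totalMass / selbergSum s N +
      (∑ d ∈ s.prodPrimes.divisors with d ≤ N, (s.nu d)⁻¹) ^ 2 := by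
  have hweights : ∑ d ∈ s.prodPrimes.divisors, |selbergWeight s N d| ≤
      ∑ d ∈ s.prodPrimes.divisors with d ≤ N, (s.nu d)⁻¹ := by
    rw [sum_filter]
    refine sum_le_sum fun d hd => ?_
    split_ifs with hdN
    · exact abs_selbergWeight_le hN (Nat.dvd_of_mem_divisors hd)
    · rw [selbergWeight_eq_zero (not_le.mp hdN), abs_zero]
  calc s.siftedSum
      ≤ s.totalMass * s.mainSum (BoundingSieve.lambdaSquared (selbergWeight s N)) +
          s.errSum (BoundingSieve.lambdaSquared (selbergWeight s N)) :=
        BoundingSieve.siftedSum_le_mainSum_errSum_of_upperMoebius _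
          (BoundingSieve.upperMoebius_lambdaSquared _ (selbergWeight_one hN))
    _ ≤ s.totalMass * (selbergSum s N)⁻¹ +
          (∑ d ∈ s.prodPrimes.divisors, |selbergWeight s N d|) ^ 2 := by
        rw [mainSum_lambdaSquared_selbergWeight hN]
        gcongr
        exact errSum_lambdaSquared_le _ hrem
    _ ≤ _ := by
        rw [div_eq_mul_inv]
        gcongr

end SelbergWeights

section Interval

variable {u v : ℝ}

theorem card_Ioc_filter_dvd (huv : u ≤ v) (q : ℕ) :
    (#{n ∈ Ioc ⌊u⌋₊ ⌊v⌋₊ | q ∣ n} : ℝ) = (⌊v / q⌋₊ : ℝ) - ⌊u / q⌋₊ := by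
  have hsplit : {n ∈ Ioc ⌊u⌋₊ ⌊v⌋₊ | q ∣ n} ∪ {n ∈ Ioc 0 ⌊u⌋₊ | q ∣ n} =
      {n ∈ Ioc 0 ⌊v⌋₊ | q ∣ n} := by
    rw [← filter_union, union_comm,
      Ioc_union_Ioc_eq_Ioc (Nat.zero_le _) (Nat.floor_le_floor huv)]
  have hdisj : Disjoint {n ∈ Ioc ⌊u⌋₊ ⌊v⌋₊ | q ∣ n} {n ∈ Ioc 0 ⌊u⌋₊ | q ∣ n} :=
    disjoint_filter_filter (Ioc_disjoint_Ioc_of_le le_rfl).symm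
  have hcard := card_union_of_disjoint hdisj
  rw [hsplit, Nat.Ioc_filter_dvd_card_eq_div, Nat.Ioc_filter_dvd_card_eq_div] at hcard
  rw [Nat.floor_div_natCast, Nat.floor_div_natCast, eq_sub_iff_add_eq]
  exact_mod_cast hcard.symm

theorem abs_card_Ioc_filter_dvd_sub_le (hu : 0 ≤ u) (huv : u ≤ v) (q : ℕ) :
    |(#{n ∈ Ioc ⌊u⌋₊ ⌊v⌋₊ | q ∣ n} : ℝ) - (q : ℝ)⁻¹ * (v - u)| ≤ 1 := by
  have hu' := Nat.floor_le (div_nonneg hu (Nat.cast_nonneg (α := ℝ) q))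
  have hv' := Nat.floor_le (div_nonneg (hu.trans huv) (Nat.cast_nonneg (α := ℝ) q))
  rw [card_Ioc_filter_dvd huv, inv_mul_eq_div, sub_div, abs_le]
  constructor <;> linarith [Nat.lt_floor_add_one (u / q), Nat.lt_floor_add_one (v / q)]

/-- The sieve of the integers in `(u, v]` by the primes up to `N`. -/
noncomputable def intervalSieve (u v : ℝ) (N : ℕ) : BoundingSieve where
  support := Ioc ⌊u⌋₊ ⌊v⌋₊
  prodPrimes := primorial N
  prodPrimes_squarefree := squarefree_primorial N
  weights _ := 1
  weights_nonneg _ := zero_le_one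
  totalMass := v - u
  nu := ⟨fun d => (d : ℝ)⁻¹, by simp⟩
  nu_mult := by
    refine ⟨by simp, fun {m n} _ => ?_⟩
    simp only [coe_mk, Nat.cast_mul, mul_inv]
  nu_pos_of_prime p hp _ := inv_pos.mpr (Nat.cast_pos.mpr hp.pos)
  nu_lt_one_of_prime p hp _ := inv_lt_one_of_one_lt₀ (Nat.one_lt_cast.mpr hp.one_lt)

theorem siftedSum_intervalSieve (N : ℕ) :
    (intervalSieve u v N).siftedSum = #{n ∈ Ioc ⌊u⌋₊ ⌊v⌋₊ | (primorial N).Coprime n} := by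
  rw [BoundingSieve.siftedSum, card_filter]
  push_cast
  rfl

theorem abs_rem_intervalSieve_le (hu : 0 ≤ u) (huv : u ≤ v) (N d : ℕ) :
    |(intervalSieve u v N).rem d| ≤ 1 := by
  have hmult : (intervalSieve u v N).multSum d = #{n ∈ Ioc ⌊u⌋₊ ⌊v⌋₊ | d ∣ n} := by
    rw [BoundingSieve.multSum, card_filter]
    push_cast
    rfl
  rw [BoundingSieve.rem, hmult]
  exact abs_card_Ioc_filter_dvd_sub_le hu huv d

theorem log_add_one_le_two_mul_selbergSum (N : ℕ) :
    Real.log (N + 1) ≤ 2 * selbergSum (intervalSieve u v N) N := by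
  refine (log_add_one_le_two_mul_sum_squarefree_inv N).trans ?_
  gcongr
  calc ∑ a ∈ Ioc 0 N with Squarefree a, (a : ℝ)⁻¹
      ≤ ∑ a ∈ (primorial N).divisors with a ≤ N, (a : ℝ)⁻¹ := by
        refine sum_le_sum_of_subset_of_nonneg (fun a ha => ?_) fun _ _ _ => by positivity
        obtain ⟨haN, hsq⟩ := mem_filter.mp ha
        have haN := (mem_Ioc.mp haN).2
        exact mem_filter.mpr ⟨Nat.mem_divisors.mpr
          ⟨hsq.dvd_primorial.trans (primorial_dvd_primorial haN), (primorial_pos N).ne'⟩, haN⟩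
    _ ≤ selbergSum (intervalSieve u v N) N := sum_le_sum fun a ha =>
        nu_le_selbergTerms (s := intervalSieve u v N) (Nat.dvd_of_mem_divisors (mem_filter.mp ha).1)

theorem card_coprime_primorial_le (hu : 0 ≤ u) (huv : u ≤ v) {N : ℕ} (hN : 1 ≤ N) :
    (#{n ∈ Ioc ⌊u⌋₊ ⌊v⌋₊ | (primorial N).Coprime n} : ℝ) ≤
      2 * (v - u) / Real.log (N + 1) + N ^ 4 := by
  have hlog : 0 < Real.log (N + 1) := Real.log_pos (by norm_cast; omega)
  have hlogS := log_add_one_le_two_mul_selbergSum (u := u) (v := v) N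
  have hmain : (v - u) / selbergSum (intervalSieve u v N) N ≤ 2 * (v - u) / Real.log (N + 1) := by
    rw [div_le_div_iff₀ (by linarith) hlog]
    nlinarith
  have herr : ∑ d ∈ (primorial N).divisors with d ≤ N, (d : ℝ)⁻¹⁻¹ ≤ (N : ℝ) ^ 2 := calc
    _ ≤ ∑ d ∈ (primorial N).divisors with d ≤ N, (N : ℝ) := by
      refine sum_le_sum fun _ hd => ?_
      rw [inv_inv]
      exact_mod_cast (mem_filter.mp hd).2
    _ ≤ ∑ _ ∈ Ioc 0 N, (N : ℝ) := by
      refine sum_le_sum_of_subset_of_nonneg (fun d hd => ?_) fun _ _ _ => by positivity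
      obtain ⟨hdP, hdN⟩ := mem_filter.mp hd
      exact mem_Ioc.mpr ⟨Nat.pos_of_mem_divisors hdP, hdN⟩
    _ = (N : ℝ) ^ 2 := by simp [sq]
  calc (#{n ∈ Ioc ⌊u⌋₊ ⌊v⌋₊ | (primorial N).Coprime n} : ℝ)
      = (intervalSieve u v N).siftedSum := (siftedSum_intervalSieve N).symm
    _ ≤ (v - u) / selbergSum (intervalSieve u v N) N +
          (∑ d ∈ (primorial N).divisors with d ≤ N, (d : ℝ)⁻¹⁻¹) ^ 2 :=
        siftedSum_le_div_selbergSum_add_sq hN fun d _ => abs_rem_intervalSieve_le hu huv N d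
    _ ≤ 2 * (v - u) / Real.log (N + 1) + ((N : ℝ) ^ 2) ^ 2 := by gcongr
    _ = _ := by ring

theorem card_Ioc_filter_lt_minFac_le {D : ℝ} (hu : 0 ≤ u) (hD : 1 < D) (huv : D ^ 5 ≤ v - u) :
    (#{n ∈ Ioc ⌊u⌋₊ ⌊v⌋₊ | D < n.minFac} : ℝ) ≤ 3 * (v - u) / Real.log D := by
  have hlog : 0 < Real.log D := Real.log_pos hD
  have hN : 1 ≤ ⌊D⌋₊ := (Nat.one_le_floor_iff D).mpr hD.le
  have hND : (⌊D⌋₊ : ℝ) ≤ D := Nat.floor_le (by linarith)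
  have hH : 0 ≤ v - u := le_trans (by positivity) huv
  have hsub : {n ∈ Ioc ⌊u⌋₊ ⌊v⌋₊ | D < n.minFac} ⊆
      {n ∈ Ioc ⌊u⌋₊ ⌊v⌋₊ | (primorial ⌊D⌋₊).Coprime n} := by
    refine monotone_filter_right _ fun n _ hn => Nat.coprime_of_dvd fun p hp hpD hpn => ?_
    have hpD : (p : ℝ) ≤ D :=
      (Nat.cast_le.mpr (hp.dvd_primorial_iff.mp hpD)).trans hND
    have hnp : (n.minFac : ℝ) ≤ p := Nat.cast_le.mpr (Nat.minFac_le_of_dvd hp.two_le hpn)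
    linarith
  have hmain : 2 * (v - u) / Real.log (⌊D⌋₊ + 1) ≤ 2 * (v - u) / Real.log D := by
    gcongr
    exact (Nat.lt_floor_add_one D).le
  have herr : (⌊D⌋₊ : ℝ) ^ 4 ≤ (v - u) / Real.log D := by
    rw [le_div_iff₀ hlog]
    calc (⌊D⌋₊ : ℝ) ^ 4 * Real.log D ≤ D ^ 4 * D := by
          gcongr
          exact (Real.log_le_sub_one_of_pos (by linarith)).trans (by linarith)
      _ = D ^ 5 := by ring
      _ ≤ v - u := huv
  calc (#{n ∈ Ioc ⌊u⌋₊ ⌊v⌋₊ | D < n.minFac} : ℝ)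
      ≤ #{n ∈ Ioc ⌊u⌋₊ ⌊v⌋₊ | (primorial ⌊D⌋₊).Coprime n} := by exact_mod_cast card_le_card hsub
    _ ≤ 2 * (v - u) / Real.log (⌊D⌋₊ + 1) + (⌊D⌋₊ : ℝ) ^ 4 :=
        card_coprime_primorial_le hu (by linarith) hN
    _ ≤ 2 * (v - u) / Real.log D + (v - u) / Real.log D := add_le_add hmain herr
    _ = 3 * (v - u) / Real.log D := by ring

end Interval

end Sieve

/-- The functions to which the theorem applies: nonnegative at the positive integers, and growing
along multiples no faster than the `k`-fold divisor function. -/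
structure IsPiltzDominated (k : ℕ) (f : ℕ → ℝ) : Prop where
  nonneg : ∀ n, 1 ≤ n → 0 ≤ f n
  mul_le : ∀ m n, 1 ≤ m → 1 ≤ n → f (m * n) ≤ piltz k m * f n

section Rankin

open Finset ArithmeticFunction
open scoped ArithmeticFunction.Moebius ArithmeticFunction.zeta

section RpowDensity

variable {δ : ℝ}

/-- The arithmetic function `n ↦ n ^ δ`, with value `0` at `0`. -/
noncomputable def rpowArith (δ : ℝ) : ArithmeticFunction ℝ :=
  ⟨fun n => if n = 0 then 0 else (n : ℝ) ^ δ, if_pos rfl⟩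

/-- The Dirichlet convolution of `n ↦ n ^ δ` with `μ`: the function whose divisor sums are
`n ^ δ`, used to open the weight in Rankin's method. -/
noncomputable def rpowDensity (δ : ℝ) : ArithmeticFunction ℝ :=
  rpowArith δ * (μ : ArithmeticFunction ℝ)

theorem rpowArith_apply (δ : ℝ) {n : ℕ} (hn : n ≠ 0) : rpowArith δ n = (n : ℝ) ^ δ := if_neg hn

theorem sum_divisors_rpowDensity (δ : ℝ) {n : ℕ} (hn : n ≠ 0) :
    ∑ d ∈ n.divisors, rpowDensity δ d = (n : ℝ) ^ δ := by
  rw [← coe_mul_zeta_apply, rpowDensity, mul_assoc, coe_moebius_mul_coe_zeta, mul_one,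
    rpowArith_apply δ hn]

theorem isMultiplicative_rpowDensity (δ : ℝ) : (rpowDensity δ).IsMultiplicative := by
  refine IsMultiplicative.mul (IsMultiplicative.iff_ne_zero.mpr ⟨?_, ?_⟩)
    isMultiplicative_moebius.intCast
  · rw [rpowArith_apply δ one_ne_zero, Nat.cast_one, Real.one_rpow]
  · intro m n hm hn _
    rw [rpowArith_apply δ hm, rpowArith_apply δ hn, rpowArith_apply δ (mul_ne_zero hm hn),
      Nat.cast_mul, Real.mul_rpow m.cast_nonneg n.cast_nonneg]

theorem rpowDensity_prime_pow_succ (δ : ℝ) {p : ℕ} (hp : p.Prime) (j : ℕ) :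
    rpowDensity δ (p ^ (j + 1)) = ((p : ℝ) ^ δ - 1) * ((p : ℝ) ^ δ) ^ j := by
  have hsum (i : ℕ) : ∑ m ∈ range (i + 1), rpowDensity δ (p ^ m) = ((p : ℝ) ^ δ) ^ i := by
    rw [← Nat.sum_divisors_prime_pow hp, sum_divisors_rpowDensity δ (pow_ne_zero i hp.ne_zero),
      Nat.cast_pow, Real.rpow_pow_comm p.cast_nonneg]
  have hsucc := sum_range_succ (fun m => rpowDensity δ (p ^ m)) (j + 1)
  rw [hsum, hsum] at hsucc
  linear_combination -hsucc

theorem rpowDensity_nonneg (hδ : 0 ≤ δ) (n : ℕ) : 0 ≤ rpowDensity δ n := by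
  rcases eq_or_ne n 0 with rfl | hn
  · exact (rpowDensity δ).map_zero.ge
  rw [(isMultiplicative_rpowDensity δ).multiplicative_factorization _ hn]
  refine prod_nonneg fun p hp => ?_
  have hprime := Nat.prime_of_mem_primeFactors hp
  have hone : 1 ≤ (p : ℝ) ^ δ := Real.one_le_rpow (Nat.one_le_cast.mpr hprime.one_le) hδ
  obtain ⟨j, hj⟩ := Nat.exists_eq_succ_of_ne_zero (Finsupp.mem_support_iff.mp hp)
  simp only [hj, Nat.succ_eq_add_one, rpowDensity_prime_pow_succ δ hprime]
  exact mul_nonneg (by linarith) (by positivity)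

end RpowDensity

section EulerFactor

variable {δ : ℝ}

theorem rpow_le_mul_prime {p : ℕ} (hp : p.Prime) (hδ : δ ≤ 1 / 2) :
    (p : ℝ) ^ δ ≤ 5 / 7 * p := by
  have hp2 : (2 : ℝ) ≤ p := Nat.ofNat_le_cast.mpr hp.two_le
  calc (p : ℝ) ^ δ ≤ (p : ℝ) ^ (1 / 2 : ℝ) := Real.rpow_le_rpow_of_exponent_le (by linarith) hδ
    _ = √p := (Real.sqrt_eq_rpow _).symm
    _ ≤ 5 / 7 * p := Real.sqrt_le_iff.mpr ⟨by positivity, by nlinarith⟩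

theorem rpowDensity_mul_piltz_prime_pow_succ_le (k : ℕ) {p : ℕ} (hp : p.Prime) (hδ0 : 0 ≤ δ)
    (hδ : δ ≤ 1 / 2) (j : ℕ) :
    rpowDensity δ (p ^ (j + 1)) * (piltz k (p ^ (j + 1)) / ((p ^ (j + 1) : ℕ) : ℝ)) ≤
      ((p : ℝ) ^ δ - 1) / p * (7 / 5) * (k.multichoose (j + 1) * (5 / 7) ^ (j + 1)) := by
  have hp0 : (0 : ℝ) < p := Nat.cast_pos.mpr hp.pos
  have hone : 1 ≤ (p : ℝ) ^ δ := Real.one_le_rpow (Nat.one_le_cast.mpr hp.one_le) hδ0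
  have hratio : (p : ℝ) ^ δ / p ≤ 5 / 7 := (div_le_iff₀ hp0).mpr (rpow_le_mul_prime hp hδ)
  calc rpowDensity δ (p ^ (j + 1)) * (piltz k (p ^ (j + 1)) / ((p ^ (j + 1) : ℕ) : ℝ))
      = ((p : ℝ) ^ δ - 1) / p * (k.multichoose (j + 1) * ((p : ℝ) ^ δ / p) ^ j) := by
        rw [rpowDensity_prime_pow_succ δ hp, piltz_prime_pow hp, div_pow, Nat.cast_pow, pow_succ]
        field_simp
    _ ≤ ((p : ℝ) ^ δ - 1) / p * (k.multichoose (j + 1) * (5 / 7) ^ j) := by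
        have : 0 ≤ (p : ℝ) ^ δ - 1 := by linarith
        gcongr
    _ = _ := by ring

theorem summable_rpowDensity_mul_piltz_prime_pow (k : ℕ) {p : ℕ} (hp : p.Prime) (hδ0 : 0 ≤ δ)
    (hδ : δ ≤ 1 / 2) :
    Summable fun j : ℕ => rpowDensity δ (p ^ j) * (piltz k (p ^ j) / ((p ^ j : ℕ) : ℝ)) := by
  rw [← summable_nat_add_iff 1]
  refine Summable.of_nonneg_of_le
    (fun j => mul_nonneg (rpowDensity_nonneg hδ0 _) (by positivity))
    (rpowDensity_mul_piltz_prime_pow_succ_le k hp hδ0 hδ) (Summable.mul_left _ ?_)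
  exact (summable_nat_add_iff 1).mpr
    (hasSum_multichoose_mul_pow k (by norm_num [abs_lt] : |(5 / 7 : ℝ)| < 1)).summable

theorem tsum_rpowDensity_mul_piltz_prime_pow_le (k : ℕ) {p : ℕ} (hp : p.Prime) (hδ0 : 0 ≤ δ)
    (hδ : δ ≤ 1 / 2) :
    ∑' j : ℕ, rpowDensity δ (p ^ j) * (piltz k (p ^ j) / ((p ^ j : ℕ) : ℝ)) ≤
      Real.exp (7 / 5 * (7 / 2) ^ k * (((p : ℝ) ^ δ - 1) / p)) := by
  have hsummable := summable_rpowDensity_mul_piltz_prime_pow k hp hδ0 hδ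
  have hgeom := hasSum_multichoose_mul_pow k (by norm_num [abs_lt] : |(5 / 7 : ℝ)| < 1)
  have hone : 1 ≤ (p : ℝ) ^ δ := Real.one_le_rpow (Nat.one_le_cast.mpr hp.one_le) hδ0
  have : 0 ≤ ((p : ℝ) ^ δ - 1) / p := div_nonneg (by linarith) p.cast_nonneg
  have htail : ∑' j : ℕ, (k.multichoose (j + 1) : ℝ) * (5 / 7) ^ (j + 1) ≤ (7 / 2) ^ k := by
    have hsplit := hgeom.summable.tsum_eq_zero_add
    rw [hgeom.tsum_eq] at hsplit
    have hzero : 0 ≤ (k.multichoose 0 : ℝ) * (5 / 7) ^ 0 := by positivity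
    rw [show (1 - 5 / 7 : ℝ)⁻¹ = 7 / 2 by norm_num] at hsplit
    linarith
  calc ∑' j : ℕ, rpowDensity δ (p ^ j) * (piltz k (p ^ j) / ((p ^ j : ℕ) : ℝ))
      = 1 + ∑' j : ℕ, rpowDensity δ (p ^ (j + 1)) *
          (piltz k (p ^ (j + 1)) / ((p ^ (j + 1) : ℕ) : ℝ)) := by
        rw [hsummable.tsum_eq_zero_add, piltz_prime_pow hp]
        simp [(isMultiplicative_rpowDensity δ).map_one]
    _ ≤ 1 + ∑' j : ℕ, ((p : ℝ) ^ δ - 1) / p * (7 / 5) *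
          (k.multichoose (j + 1) * (5 / 7) ^ (j + 1)) := by
        refine add_le_add_right (Summable.tsum_le_tsum
          (rpowDensity_mul_piltz_prime_pow_succ_le k hp hδ0 hδ) ?_ ?_) 1
        · exact (summable_nat_add_iff 1).mpr hsummable
        · exact ((summable_nat_add_iff 1).mpr hgeom.summable).mul_left _
    _ ≤ 1 + ((p : ℝ) ^ δ - 1) / p * (7 / 5) * (7 / 2) ^ k := by
        rw [tsum_mul_left]
        gcongr
    _ = 7 / 5 * (7 / 2) ^ k * (((p : ℝ) ^ δ - 1) / p) + 1 := by ring
    _ ≤ _ := Real.add_one_le_exp _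

theorem sum_smooth_rpowDensity_mul_piltz_le (k : ℕ) (hδ0 : 0 ≤ δ) (hδ : δ ≤ 1 / 2) {N : ℕ}
    {D : Finset ℕ} (hD : ∀ d ∈ D, d ∈ Nat.smoothNumbers (N + 1)) :
    ∑ d ∈ D, rpowDensity δ d * (piltz k d / d) ≤
      Real.exp (7 / 5 * (7 / 2) ^ k * ∑ p ∈ N.primesLE, ((p : ℝ) ^ δ - 1) / p) := by
  set h : ℕ → ℝ := fun d => rpowDensity δ d * (piltz k d / d)
  have hnonneg (d : ℕ) : 0 ≤ h d := mul_nonneg (rpowDensity_nonneg hδ0 d) (by positivity)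
  obtain ⟨-, hEuler⟩ := EulerProduct.summable_and_hasSum_smoothNumbers_prod_primesBelow_tsum
    (f := h) (by simp [h, (isMultiplicative_rpowDensity δ).map_one, piltz_one_right])
    (fun {m n} hmn => by
      simp only [h, (isMultiplicative_rpowDensity δ).map_mul_of_coprime hmn,
        piltz_mul_of_coprime k hmn, Nat.cast_mul]
      ring)
    (fun {p} hp => (summable_rpowDensity_mul_piltz_prime_pow k hp hδ0 hδ).norm) (N + 1)
  calc ∑ d ∈ D, h d = ∑ d ∈ D.subtype (· ∈ Nat.smoothNumbers (N + 1)), h d :=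
        (sum_subtype_of_mem h hD).symm
    _ ≤ ∏ p ∈ (N + 1).primesBelow, ∑' j, h (p ^ j) := sum_le_hasSum _ (fun d _ => hnonneg d) hEuler
    _ ≤ ∏ p ∈ (N + 1).primesBelow,
          Real.exp (7 / 5 * (7 / 2) ^ k * (((p : ℝ) ^ δ - 1) / p)) :=
        prod_le_prod (fun p _ => tsum_nonneg fun j => hnonneg _) fun p hp =>
          tsum_rpowDensity_mul_piltz_prime_pow_le k (Nat.prime_of_mem_primesBelow hp) hδ0 hδ
    _ = _ := by rw [← Real.exp_sum, ← mul_sum]; rfl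

end EulerFactor

variable {k : ℕ} {f : ℕ → ℝ}

theorem IsPiltzDominated.sum_dvd_div_le (hf : IsPiltzDominated k f) {d : ℕ} (hd : 0 < d) (Z : ℕ) :
    ∑ a ∈ Ioc 0 Z with d ∣ a, f a / a ≤ piltz k d / d * ∑ a ∈ Ioc 0 Z, f a / a := by
  calc ∑ a ∈ Ioc 0 Z with d ∣ a, f a / a
      ≤ ∑ a ∈ (Ioc 0 Z).image (d * ·), f a / a := by
        refine sum_le_sum_of_subset_of_nonneg (fun a ha => ?_) fun a ha _ => ?_
        · obtain ⟨haI, n, rfl⟩ := mem_filter.mp ha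
          obtain ⟨hpos, hle⟩ := mem_Ioc.mp haI
          exact mem_image.mpr ⟨n, mem_Ioc.mpr ⟨Nat.pos_of_mul_pos_left hpos,
            (Nat.le_mul_of_pos_left n hd).trans hle⟩, rfl⟩
        · obtain ⟨n, hn, rfl⟩ := mem_image.mp ha
          exact div_nonneg (hf.nonneg _ (Nat.mul_pos hd (mem_Ioc.mp hn).1)) (Nat.cast_nonneg _)
    _ = ∑ n ∈ Ioc 0 Z, f (d * n) / ((d * n : ℕ) : ℝ) :=
        sum_image fun _ _ _ _ => Nat.eq_of_mul_eq_mul_left hd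
    _ ≤ piltz k d / d * ∑ a ∈ Ioc 0 Z, f a / a := by
        rw [mul_sum]
        refine sum_le_sum fun n hn => ?_
        rw [Nat.cast_mul, div_mul_div_comm]
        gcongr
        exact hf.mul_le d n hd (mem_Ioc.mp hn).1

theorem IsPiltzDominated.sum_div_nonneg (hf : IsPiltzDominated k f) (Z : ℕ) :
    0 ≤ ∑ a ∈ Ioc 0 Z, f a / a :=
  sum_nonneg fun a ha => div_nonneg (hf.nonneg a (mem_Ioc.mp ha).1) a.cast_nonneg

theorem IsPiltzDominated.sum_divisors_mul_le (hf : IsPiltzDominated k f) {g : ℕ → ℝ}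
    (hg : ∀ d, 0 ≤ g d) {Z : ℕ} {A : Finset ℕ} (hA : A ⊆ Ioc 0 Z) :
    ∑ a ∈ A, (∑ d ∈ a.divisors, g d) * (f a / a) ≤
      (∑ d ∈ A.biUnion Nat.divisors, g d * (piltz k d / d)) * ∑ a ∈ Ioc 0 Z, f a / a := by
  calc ∑ a ∈ A, (∑ d ∈ a.divisors, g d) * (f a / a)
      = ∑ d ∈ A.biUnion Nat.divisors, ∑ a ∈ A with d ∣ a, g d * (f a / a) := by
        simp only [sum_mul]
        refine sum_comm' fun a d => ?_
        simp only [mem_biUnion, mem_filter, Nat.mem_divisors]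
        constructor
        · rintro ⟨ha, hda, ha0⟩
          exact ⟨⟨ha, hda⟩, a, ha, hda, ha0⟩
        · rintro ⟨⟨ha, hda⟩, -⟩
          exact ⟨ha, hda, (mem_Ioc.mp (hA ha)).1.ne'⟩
    _ ≤ ∑ d ∈ A.biUnion Nat.divisors,
          g d * (piltz k d / d * ∑ a ∈ Ioc 0 Z, f a / a) := by
        refine sum_le_sum fun d hd => ?_
        obtain ⟨a, -, hda⟩ := mem_biUnion.mp hd
        rw [← mul_sum]
        refine mul_le_mul_of_nonneg_left ?_ (hg d)
        refine (sum_le_sum_of_subset_of_nonneg (filter_subset_filter _ hA) fun b hb _ => ?_).trans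
          (hf.sum_dvd_div_le (Nat.pos_of_mem_divisors hda) Z)
        exact div_nonneg (hf.nonneg b (mem_Ioc.mp (mem_filter.mp hb).1).1) b.cast_nonneg
    _ = _ := by rw [sum_mul]; exact sum_congr rfl fun d _ => (mul_assoc _ _ _).symm

theorem IsPiltzDominated.sum_smooth_rpow_mul_le (hf : IsPiltzDominated k f) {δ : ℝ} (hδ0 : 0 ≤ δ)
    (hδ : δ ≤ 1 / 2) {N Z : ℕ} {A : Finset ℕ} (hA : A ⊆ Ioc 0 Z)
    (hsmooth : ∀ a ∈ A, a ∈ Nat.smoothNumbers (N + 1)) :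
    ∑ a ∈ A, (a : ℝ) ^ δ * (f a / a) ≤
      Real.exp (7 / 5 * (7 / 2) ^ k * ∑ p ∈ N.primesLE, ((p : ℝ) ^ δ - 1) / p) *
        ∑ a ∈ Ioc 0 Z, f a / a := by
  calc ∑ a ∈ A, (a : ℝ) ^ δ * (f a / a)
      = ∑ a ∈ A, (∑ d ∈ a.divisors, rpowDensity δ d) * (f a / a) :=
        sum_congr rfl fun a ha => by
          rw [sum_divisors_rpowDensity δ (mem_Ioc.mp (hA ha)).1.ne']
    _ ≤ _ := hf.sum_divisors_mul_le (rpowDensity_nonneg hδ0) hA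
    _ ≤ _ := by
        refine mul_le_mul_of_nonneg_right
          (sum_smooth_rpowDensity_mul_piltz_le k hδ0 hδ fun d hd => ?_) (hf.sum_div_nonneg Z)
        obtain ⟨a, ha, hda⟩ := mem_biUnion.mp hd
        exact Nat.mem_smoothNumbers_of_dvd (hsmooth a ha) (Nat.dvd_of_mem_divisors hda)

/-- The exponent of the Euler product in Rankin's method, when the primes up to `w` are weighted
by `p ^ (K / log w)`. -/
noncomputable def rankinExponent (k : ℕ) (K : ℝ) : ℝ :=
  7 / 5 * (7 / 2) ^ k * ((K + 7 / 10) * Real.exp K)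

theorem exp_sub_one_le_mul_exp (t : ℝ) : Real.exp t - 1 ≤ t * Real.exp t := by
  have hmul : Real.exp (-t) * Real.exp t = 1 := by
    rw [← Real.exp_add, neg_add_cancel, Real.exp_zero]
  nlinarith [mul_le_mul_of_nonneg_right (Real.add_one_le_exp (-t)) (Real.exp_pos t).le]

theorem log_four_le : Real.log 4 ≤ 7 / 5 := by
  rw [show (4 : ℝ) = 2 * 2 by norm_num, Real.log_mul two_ne_zero two_ne_zero]
  linarith [Real.log_two_lt_d9]

theorem sum_prime_rpow_sub_one_div_le {w K : ℝ} (hK : 1 / 2 ≤ K) (hw1 : 1 ≤ w)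
    (hw : 2 * K ≤ Real.log w) :
    ∑ p ∈ ⌊w⌋₊.primesLE, ((p : ℝ) ^ (K / Real.log w) - 1) / p ≤ (K + 7 / 10) * Real.exp K := by
  have hlw : 0 < Real.log w := by linarith
  set δ := K / Real.log w
  have hδ0 : 0 ≤ δ := by positivity
  have hδw : δ * Real.log w = K := div_mul_cancel₀ _ hlw.ne'
  have hδ2 : δ ≤ 1 / 2 := (div_le_iff₀ hlw).mpr (by linarith)
  have hterm : ∀ p ∈ ⌊w⌋₊.primesLE,
      ((p : ℝ) ^ δ - 1) / p ≤ δ * Real.exp K * (Real.log p / p) := by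
    intro p hp
    obtain ⟨hpw, hprime⟩ := Nat.mem_primesLE.mp hp
    have hp0 : (0 : ℝ) < p := Nat.cast_pos.mpr hprime.pos
    have hpw' : (p : ℝ) ≤ w := (Nat.le_floor_iff (by linarith)).mp hpw
    have hexp : Real.exp (Real.log p * δ) ≤ Real.exp K := by
      rw [← hδw, mul_comm]
      gcongr
    calc ((p : ℝ) ^ δ - 1) / p ≤ Real.log p * δ * Real.exp (Real.log p * δ) / p := by
          rw [Real.rpow_def_of_pos hp0]
          gcongr
          exact exp_sub_one_le_mul_exp _
      _ ≤ Real.log p * δ * Real.exp K / p := by gcongr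
      _ = δ * Real.exp K * (Real.log p / p) := by ring
  calc ∑ p ∈ ⌊w⌋₊.primesLE, ((p : ℝ) ^ δ - 1) / p
      ≤ δ * Real.exp K * ∑ p ∈ ⌊w⌋₊.primesLE, Real.log p / p := by
        rw [mul_sum]
        exact sum_le_sum hterm
    _ ≤ δ * Real.exp K * (Real.log w + Real.log 4) := by
        gcongr
        refine (sum_log_prime_div_le _).trans ?_
        gcongr
        · exact_mod_cast (Nat.floor_pos.mpr hw1)
        · exact Nat.floor_le (by linarith)
    _ = (δ * Real.log w + δ * Real.log 4) * Real.exp K := by ring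
    _ ≤ (K + 7 / 10) * Real.exp K := by
        gcongr
        · exact hδw.le
        · nlinarith [log_four_le]

theorem IsPiltzDominated.sum_smooth_div_le (hf : IsPiltzDominated k f) {w K t : ℝ}
    (hK : 1 / 2 ≤ K) (hw1 : 1 ≤ w) (hw : 2 * K ≤ Real.log w) (ht : 0 < t) {Z : ℕ} {A : Finset ℕ}
    (hA : A ⊆ Ioc 0 Z) (hAt : ∀ a ∈ A, t ≤ a)
    (hsmooth : ∀ a ∈ A, a ∈ Nat.smoothNumbers (⌊w⌋₊ + 1)) :
    ∑ a ∈ A, f a / a ≤ t ^ (-(K / Real.log w)) * Real.exp (rankinExponent k K) *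
      ∑ a ∈ Ioc 0 Z, f a / a := by
  have hlw : 0 < Real.log w := by linarith
  set δ := K / Real.log w
  have hδ0 : 0 ≤ δ := by positivity
  have hδ : δ ≤ 1 / 2 := (div_le_iff₀ hlw).mpr (by linarith)
  calc ∑ a ∈ A, f a / a ≤ ∑ a ∈ A, t ^ (-δ) * ((a : ℝ) ^ δ * (f a / a)) := by
        refine sum_le_sum fun a ha => ?_
        have hfa : 0 ≤ f a / a := div_nonneg (hf.nonneg a (mem_Ioc.mp (hA ha)).1) a.cast_nonneg
        rw [← mul_assoc, Real.rpow_neg ht.le, inv_mul_eq_div]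
        refine le_mul_of_one_le_left hfa ((one_le_div (by positivity)).mpr ?_)
        exact Real.rpow_le_rpow ht.le (hAt a ha) hδ0
    _ ≤ t ^ (-δ) * (Real.exp (7 / 5 * (7 / 2) ^ k * ∑ p ∈ ⌊w⌋₊.primesLE, ((p : ℝ) ^ δ - 1) / p) *
          ∑ a ∈ Ioc 0 Z, f a / a) := by
        rw [← mul_sum]
        gcongr
        exact hf.sum_smooth_rpow_mul_le hδ0 hδ hA hsmooth
    _ ≤ t ^ (-δ) * (Real.exp (rankinExponent k K) * ∑ a ∈ Ioc 0 Z, f a / a) := by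
        have := hf.sum_div_nonneg Z
        unfold rankinExponent
        gcongr
        exact sum_prime_rpow_sub_one_div_le hK hw1 hw
    _ = _ := (mul_assoc _ _ _).symm

end Rankin

section Decomposition

open Finset

/-- The smooth part of `n` at level `Z`: the largest divisor `a ≤ Z` of `n` such that no prime
factor of `a` exceeds a prime factor of `n / a`. It consists of the smallest prime factors of `n`,
taken with multiplicity as long as their product is at most `Z`. -/
noncomputable def smoothPart (Z n : ℕ) : ℕ :=
  {a ∈ n.divisors | a ≤ Z ∧ ∀ p ∈ a.primeFactors, ∀ q ∈ (n / a).primeFactors, p ≤ q}.sup id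

/-- The complementary divisor of `smoothPart Z n`. -/
noncomputable def roughPart (Z n : ℕ) : ℕ := n / smoothPart Z n

/-- The prime that separates `smoothPart Z n` from `roughPart Z n`: the least prime factor of the
latter, and `1` when `n ≤ Z`. -/
noncomputable def cutPrime (Z n : ℕ) : ℕ := (roughPart Z n).minFac

variable {Z n : ℕ}

theorem smoothPart_spec (hZ : 0 < Z) (hn : n ≠ 0) :
    smoothPart Z n ∣ n ∧ smoothPart Z n ≤ Z ∧
      ∀ p ∈ (smoothPart Z n).primeFactors, ∀ q ∈ (roughPart Z n).primeFactors, p ≤ q := by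
  have hne : {a ∈ n.divisors | a ≤ Z ∧
      ∀ p ∈ a.primeFactors, ∀ q ∈ (n / a).primeFactors, p ≤ q}.Nonempty :=
    ⟨1, mem_filter.mpr ⟨Nat.one_mem_divisors.mpr hn, hZ, by simp⟩⟩
  obtain ⟨a, ha, hsup⟩ := exists_mem_eq_sup _ hne id
  obtain ⟨hdvd, hle, hprimes⟩ := mem_filter.mp ha
  rw [roughPart, show smoothPart Z n = a from hsup]
  exact ⟨Nat.dvd_of_mem_divisors hdvd, hle, hprimes⟩

theorem smoothPart_mul_roughPart (hZ : 0 < Z) (hn : n ≠ 0) :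
    smoothPart Z n * roughPart Z n = n :=
  Nat.mul_div_cancel' (smoothPart_spec hZ hn).1

theorem smoothPart_pos (hZ : 0 < Z) (hn : n ≠ 0) : 0 < smoothPart Z n :=
  Nat.pos_of_dvd_of_pos (smoothPart_spec hZ hn).1 (Nat.pos_of_ne_zero hn)

theorem roughPart_ne_zero (hZ : 0 < Z) (hn : n ≠ 0) : roughPart Z n ≠ 0 :=
  right_ne_zero_of_mul ((smoothPart_mul_roughPart hZ hn).trans_ne hn)

theorem roughPart_le : roughPart Z n ≤ n := Nat.div_le_self _ _

theorem roughPart_ne_one (hZ : 0 < Z) (hn : Z < n) : roughPart Z n ≠ 1 := by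
  intro hone
  have hmul := smoothPart_mul_roughPart hZ hn.ne_bot
  rw [hone, mul_one] at hmul
  exact hn.not_ge (hmul ▸ (smoothPart_spec hZ hn.ne_bot).2.1)

theorem image_smoothPart_subset (hZ : 0 < Z) {N : Finset ℕ} (hN : ∀ n ∈ N, n ≠ 0) :
    N.image (smoothPart Z) ⊆ Ioc 0 Z := by
  intro a ha
  obtain ⟨n, hn, rfl⟩ := mem_image.mp ha
  exact mem_Ioc.mpr ⟨smoothPart_pos hZ (hN n hn), (smoothPart_spec hZ (hN n hn)).2.1⟩

theorem prime_cutPrime (hZ : 0 < Z) (hn : Z < n) : (cutPrime Z n).Prime :=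
  Nat.minFac_prime (roughPart_ne_one hZ hn)

theorem smoothPart_mem_smoothNumbers (hZ : 0 < Z) (hn : Z < n) {w : ℕ}
    (hw : cutPrime Z n ≤ w) : smoothPart Z n ∈ Nat.smoothNumbers (w + 1) := by
  refine Nat.mem_smoothNumbers'.mpr fun p hp hpdvd => Nat.lt_succ_of_le (le_trans ?_ hw)
  refine (smoothPart_spec hZ hn.ne_bot).2.2 p ?_ _ ?_
  · exact hp.mem_primeFactors hpdvd (smoothPart_pos hZ hn.ne_bot).ne'
  · exact (prime_cutPrime hZ hn).mem_primeFactors (Nat.minFac_dvd _)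
      (roughPart_ne_zero hZ hn.ne_bot)

theorem lt_smoothPart_mul_cutPrime (hZ : 0 < Z) (hn : Z < n) :
    Z < smoothPart Z n * cutPrime Z n := by
  by_contra! hle
  have hn0 : n ≠ 0 := hn.ne_bot
  have hq := prime_cutPrime hZ hn
  have ha := smoothPart_pos hZ hn0
  have hdvd : cutPrime Z n ∣ roughPart Z n := Nat.minFac_dvd _
  have hquot : n / (smoothPart Z n * cutPrime Z n) = roughPart Z n / cutPrime Z n :=
    (Nat.div_div_eq_div_mul _ _ _).symm
  have hmem : smoothPart Z n * cutPrime Z n ∈ {a ∈ n.divisors | a ≤ Z ∧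
      ∀ p ∈ a.primeFactors, ∀ q ∈ (n / a).primeFactors, p ≤ q} := by
    refine mem_filter.mpr ⟨Nat.mem_divisors.mpr ⟨?_, hn0⟩, hle, fun p hp q hq' => ?_⟩
    · exact (Nat.mul_dvd_mul_left _ hdvd).trans (smoothPart_mul_roughPart hZ hn0).dvd
    · rw [hquot] at hq'
      have hqmem : q ∈ (roughPart Z n).primeFactors :=
        Nat.primeFactors_mono (Nat.div_dvd_of_dvd hdvd) (roughPart_ne_zero hZ hn0) hq'
      rw [Nat.primeFactors_mul ha.ne' hq.ne_zero, hq.primeFactors, mem_union, mem_singleton] at hp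
      rcases hp with hp | rfl
      · exact (smoothPart_spec hZ hn0).2.2 p hp q hqmem
      · exact Nat.minFac_le_of_dvd (Nat.prime_of_mem_primeFactors hqmem).two_le
          (Nat.dvd_of_mem_primeFactors hqmem)
  exact (lt_mul_of_one_lt_right ha hq.one_lt).not_ge (le_sup (f := id) hmem)

theorem card_fiber_smoothPart_le (hZ : 0 < Z) {u v : ℝ} {N : Finset ℕ}
    (hN : N ⊆ Ioc ⌊u⌋₊ ⌊v⌋₊) {Q : ℕ → Prop} [DecidablePred Q]
    (hQ : ∀ n ∈ N, Q (roughPart Z n)) {a : ℕ} :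
    #{n ∈ N | smoothPart Z n = a} ≤ #{b ∈ Ioc ⌊u / a⌋₊ ⌊v / a⌋₊ | Q b} := by
  have hmul : ∀ n ∈ N, smoothPart Z n * roughPart Z n = n := fun n hn =>
    smoothPart_mul_roughPart hZ (mem_Ioc.mp (hN hn)).1.ne_bot
  refine card_le_card_of_injOn (roughPart Z) (fun n hn => ?_) fun m hm n hn hmn => ?_
  · obtain ⟨hnN, rfl⟩ := mem_filter.mp hn
    obtain ⟨hlt, hle⟩ := mem_Ioc.mp (hN hnN)
    have ha := smoothPart_pos hZ hlt.ne_bot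
    rw [← hmul n hnN, mul_comm] at hlt hle
    refine mem_filter.mpr ⟨mem_Ioc.mpr ?_, hQ n hnN⟩
    rw [Nat.floor_div_natCast, Nat.floor_div_natCast]
    exact ⟨(Nat.div_lt_iff_lt_mul ha).mpr hlt, (Nat.le_div_iff_mul_le ha).mpr hle⟩
  · obtain ⟨hmN, hma⟩ := mem_filter.mp hm
    obtain ⟨hnN, hna⟩ := mem_filter.mp hn
    rw [← hmul m hmN, ← hmul n hnN, hma, hna, hmn]

theorem IsPiltzDominated.sum_le_of_card_fiber_le {k : ℕ} {f : ℕ → ℝ} (hf : IsPiltzDominated k f)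
    (hZ : 0 < Z) {N : Finset ℕ} (hN : ∀ n ∈ N, n ≠ 0) {T Y : ℝ}
    (hT : ∀ n ∈ N, piltz k (roughPart Z n) ≤ T)
    (hY : ∀ a ∈ N.image (smoothPart Z), (#{n ∈ N | smoothPart Z n = a} : ℝ) ≤ Y / a) :
    ∑ n ∈ N, f n ≤ T * Y * ∑ a ∈ N.image (smoothPart Z), f a / a := by
  rw [← sum_fiberwise_of_maps_to (fun n hn => mem_image_of_mem (smoothPart Z) hn), mul_sum]
  refine sum_le_sum fun a ha => ?_
  obtain ⟨m, hm, hma⟩ := mem_image.mp ha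
  have hT0 : 0 ≤ T := (Nat.cast_nonneg _).trans (hT m hm)
  have ha0 : 0 < a := hma ▸ smoothPart_pos hZ (hN m hm)
  have hfa : 0 ≤ f a := hf.nonneg a ha0
  calc ∑ n ∈ N with smoothPart Z n = a, f n ≤ ∑ n ∈ N with smoothPart Z n = a, T * f a := by
        refine sum_le_sum fun n hn => ?_
        obtain ⟨hnN, hna⟩ := mem_filter.mp hn
        have hb : 1 ≤ roughPart Z n := Nat.one_le_iff_ne_zero.mpr (roughPart_ne_zero hZ (hN n hnN))
        calc f n = f (roughPart Z n * a) := by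
              rw [← hna, mul_comm, smoothPart_mul_roughPart hZ (hN n hnN)]
          _ ≤ piltz k (roughPart Z n) * f a := hf.mul_le _ _ hb ha0
          _ ≤ T * f a := by gcongr; exact hT n hnN
    _ = #{n ∈ N | smoothPart Z n = a} * (T * f a) := by rw [sum_const, nsmul_eq_mul]
    _ ≤ Y / a * (T * f a) := by gcongr; exact hY a ha
    _ = T * Y * (f a / a) := by ring

theorem minFac_pow_cardFactors_le (hn : n ≠ 0) :
    n.minFac ^ ArithmeticFunction.cardFactors n ≤ n := by
  rw [ArithmeticFunction.cardFactors_apply]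
  conv_rhs => rw [← Nat.prod_primeFactorsList hn]
  refine List.pow_card_le_prod _ _ fun p hp => ?_
  exact Nat.minFac_le_of_dvd (Nat.prime_of_mem_primeFactorsList hp).two_le
    (Nat.dvd_of_mem_primeFactorsList hp)

theorem piltz_le_rpow_div_log_minFac {k : ℕ} (hk : 0 < k) (hn : n ≠ 0) {c L : ℝ} (hc : 0 < c)
    (hcn : c ≤ Real.log n.minFac) (hnL : Real.log n ≤ L) :
    (piltz k n : ℝ) ≤ (k : ℝ) ^ (L / c) := by
  have hcard : (ArithmeticFunction.cardFactors n : ℝ) ≤ L / c := by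
    rw [le_div_iff₀ hc]
    calc (ArithmeticFunction.cardFactors n : ℝ) * c
        ≤ ArithmeticFunction.cardFactors n * Real.log n.minFac := by gcongr
      _ = Real.log ((n.minFac ^ ArithmeticFunction.cardFactors n : ℕ) : ℝ) := by
          rw [Nat.cast_pow, Real.log_pow]
      _ ≤ Real.log n := by
          have := n.minFac_pos
          gcongr
          exact minFac_pow_cardFactors_le hn
      _ ≤ L := hnL
  calc (piltz k n : ℝ) ≤ (k : ℝ) ^ (ArithmeticFunction.cardFactors n : ℝ) := by
        rw [Real.rpow_natCast]
        exact_mod_cast piltz_le_pow_cardFactors k hn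
    _ ≤ (k : ℝ) ^ (L / c) := Real.rpow_le_rpow_of_exponent_le (Nat.one_le_cast.mpr hk) hcard

end Decomposition

section ShortSums

open Finset

theorem card_Ioc_floor_le {u v : ℝ} (hu : 0 ≤ u) (huv : 1 ≤ v - u) :
    (#(Ioc ⌊u⌋₊ ⌊v⌋₊) : ℝ) ≤ 2 * (v - u) := by
  rw [Nat.card_Ioc, Nat.cast_sub (Nat.floor_le_floor (by linarith))]
  linarith [Nat.floor_le (show 0 ≤ v by linarith), Nat.lt_floor_add_one u]

theorem filter_sub_lt_Icc_floor (x y : ℝ) :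
    (Icc 1 ⌊x⌋₊).filter (fun n : ℕ => x - y < (n : ℝ)) = Ioc ⌊x - y⌋₊ ⌊x⌋₊ := by
  ext n
  rw [mem_filter, mem_Icc, mem_Ioc]
  constructor
  · rintro ⟨⟨hn, hnx⟩, hlt⟩
    exact ⟨(Nat.floor_lt' (Nat.one_le_iff_ne_zero.mp hn)).mpr hlt, hnx⟩
  · rintro ⟨hlt, hnx⟩
    exact ⟨⟨Nat.one_le_of_lt hlt, hnx⟩, (Nat.floor_lt' hlt.ne_bot).mp hlt⟩

theorem sum_add_one_mul_four_fifths_pow_le (S : Finset ℕ) :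
    ∑ s ∈ S, ((s : ℝ) + 1) * (4 / 5) ^ s ≤ 25 := by
  have hr : ‖(4 / 5 : ℝ)‖ < 1 := by norm_num [abs_lt]
  have hsum := (hasSum_coe_mul_geometric_of_norm_lt_one hr).add
    (hasSum_geometric_of_norm_lt_one hr)
  calc ∑ s ∈ S, ((s : ℝ) + 1) * (4 / 5) ^ s
      = ∑ s ∈ S, ((s : ℝ) * (4 / 5) ^ s + (4 / 5) ^ s) := by simp only [add_mul, one_mul]
    _ ≤ _ := sum_le_hasSum S (fun s _ => by positivity) hsum
    _ = 25 := by norm_num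

theorem log_log_le {ℓ L : ℝ} (hℓ : 0 < ℓ) (hL : 6400 * ℓ ^ 2 ≤ L) :
    Real.log L ≤ L / (40 * ℓ) := by
  have hL0 : 0 < L := lt_of_lt_of_le (by positivity) hL
  have hlog := Real.log_le_sub_one_of_pos (Real.sqrt_pos.mpr hL0)
  rw [Real.log_sqrt hL0.le] at hlog
  have hsqrt : 80 * ℓ ≤ √L := Real.le_sqrt_of_sq_le (by nlinarith)
  rw [le_div_iff₀ (by positivity)]
  calc Real.log L * (40 * ℓ) ≤ 2 * √L * (40 * ℓ) := by gcongr; linarith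
    _ = √L * (80 * ℓ) := by ring
    _ ≤ √L * √L := by gcongr
    _ = L := Real.mul_self_sqrt hL0.le

/-- The parameter `K` at which Rankin's method is applied: the saving `exp (-K * s / 2)` has to
beat the factor `k ^ (2 * ℓ * s)` by which `piltz k` grows with the number `s` of prime factors
allowed for a short interval. -/
noncomputable def rankinParam (k : ℕ) (ℓ : ℝ) : ℝ := 4 * ℓ * Real.log k + 1 / 2

theorem half_le_rankinParam {k : ℕ} {ℓ : ℝ} (hℓ : 0 ≤ ℓ) : 1 / 2 ≤ rankinParam k ℓ := by
  have : 0 ≤ 4 * ℓ * Real.log k := mul_nonneg (by positivity) (Real.log_natCast_nonneg k)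
  rw [rankinParam]
  linarith

variable {k : ℕ} {f : ℕ → ℝ} {x R ℓ : ℝ} {N : Finset ℕ}

theorem floor_exp_pos (hR : 0 < R) : 0 < ⌊Real.exp R⌋₊ :=
  Nat.floor_pos.mpr (Real.one_le_exp hR.le)

theorem exp_half_le_smoothPart (hR : 0 < R) {n : ℕ} (hn : ⌊Real.exp R⌋₊ < n)
    (hp : Real.log (cutPrime ⌊Real.exp R⌋₊ n) ≤ R / 2) :
    Real.exp (R / 2) ≤ smoothPart ⌊Real.exp R⌋₊ n := by
  have hZ := floor_exp_pos hR
  have hp0 : (0 : ℝ) < cutPrime ⌊Real.exp R⌋₊ n := Nat.cast_pos.mpr (prime_cutPrime hZ hn).pos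
  have hlt := Nat.lt_of_floor_lt (lt_smoothPart_mul_cutPrime hZ hn)
  refine le_of_mul_le_mul_right ?_ (Real.exp_pos (R / 2))
  calc Real.exp (R / 2) * Real.exp (R / 2) = Real.exp R := by rw [← Real.exp_add, add_halves]
    _ ≤ smoothPart ⌊Real.exp R⌋₊ n * cutPrime ⌊Real.exp R⌋₊ n := by exact_mod_cast hlt.le
    _ ≤ smoothPart ⌊Real.exp R⌋₊ n * Real.exp (R / 2) := by
        gcongr
        exact (Real.log_le_iff_le_exp hp0).mp hp

theorem IsPiltzDominated.sum_image_smoothPart_le (hf : IsPiltzDominated k f) {K ω : ℝ}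
    (hK : 1 / 2 ≤ K) (hω : 2 * K ≤ ω) (hR : 0 < R) (hN : ∀ n ∈ N, ⌊Real.exp R⌋₊ < n)
    (hpω : ∀ n ∈ N, Real.log (cutPrime ⌊Real.exp R⌋₊ n) ≤ ω)
    (hpR : ∀ n ∈ N, Real.log (cutPrime ⌊Real.exp R⌋₊ n) ≤ R / 2) :
    ∑ a ∈ N.image (smoothPart ⌊Real.exp R⌋₊), f a / a ≤
      Real.exp (-(K * R / (2 * ω))) * Real.exp (rankinExponent k K) *
        ∑ a ∈ Ioc 0 ⌊Real.exp R⌋₊, f a / a := by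
  have hZ := floor_exp_pos hR
  have hω0 : 0 < ω := by linarith
  have hexponent : Real.exp (-(K * R / (2 * ω))) =
      Real.exp (R / 2) ^ (-(K / Real.log (Real.exp ω))) := by
    rw [Real.log_exp, ← Real.exp_mul]
    congr 1
    field_simp
  rw [hexponent]
  refine hf.sum_smooth_div_le hK (Real.one_le_exp hω0.le) (by rwa [Real.log_exp])
    (Real.exp_pos _) (image_smoothPart_subset hZ fun n hn => (hN n hn).ne_bot) ?_ ?_
  · intro a ha
    obtain ⟨n, hn, rfl⟩ := mem_image.mp ha
    exact exp_half_le_smoothPart hR (hN n hn) (hpR n hn)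
  · intro a ha
    obtain ⟨n, hn, rfl⟩ := mem_image.mp ha
    have hp0 := (prime_cutPrime hZ (hN n hn)).pos
    refine smoothPart_mem_smoothNumbers hZ (hN n hn) (Nat.le_floor ?_)
    exact (Real.log_le_iff_le_exp (Nat.cast_pos.mpr hp0)).mp (hpω n hn)

theorem card_fiber_smoothPart_le_of_lt_log_cutPrime (hR : 0 < R) {σ : ℝ} (hσ : 1 ≤ σ)
    (hyx : Real.exp (2 * R) ≤ x) (hN : N ⊆ Ioc ⌊x - Real.exp (2 * R)⌋₊ ⌊x⌋₊)
    (hp : ∀ n ∈ N, R / σ < Real.log (cutPrime ⌊Real.exp R⌋₊ n)) {a : ℕ} (ha : 0 < a)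
    (haR : a ≤ ⌊Real.exp R⌋₊) :
    (#{n ∈ N | smoothPart ⌊Real.exp R⌋₊ n = a} : ℝ) ≤ 15 * σ / R * Real.exp (2 * R) / a := by
  set D := Real.exp (R / σ / 5)
  have ha0 : (0 : ℝ) < a := Nat.cast_pos.mpr ha
  have hlen : x / a - (x - Real.exp (2 * R)) / a = Real.exp (2 * R) / a := by ring
  have hrough : ∀ n ∈ N, D < (roughPart ⌊Real.exp R⌋₊ n).minFac := fun n hn => by
    rw [← Real.lt_log_iff_exp_lt (Nat.cast_pos.mpr (Nat.minFac_pos _))]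
    have : 0 < R / σ := by positivity
    have := hp n hn
    rw [cutPrime] at this
    linarith
  have hD : D ^ 5 ≤ x / a - (x - Real.exp (2 * R)) / a := by
    rw [hlen, le_div_iff₀ ha0, ← Real.exp_nat_mul]
    calc Real.exp ((5 : ℕ) * (R / σ / 5)) * a ≤ Real.exp R * Real.exp R := by
          gcongr
          · push_cast
            rw [mul_div_cancel₀ _ (by norm_num)]
            exact div_le_self hR.le hσ
          · exact (Nat.le_floor_iff (Real.exp_pos R).le).mp haR
      _ = Real.exp (2 * R) := by rw [← Real.exp_add, two_mul]
  calc (#{n ∈ N | smoothPart ⌊Real.exp R⌋₊ n = a} : ℝ)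
      ≤ #{b ∈ Ioc ⌊(x - Real.exp (2 * R)) / a⌋₊ ⌊x / a⌋₊ | D < (b.minFac : ℝ)} :=
        Nat.cast_le.mpr (card_fiber_smoothPart_le (floor_exp_pos hR) hN hrough)
    _ ≤ 3 * (x / a - (x - Real.exp (2 * R)) / a) / Real.log D :=
        card_Ioc_filter_lt_minFac_le (div_nonneg (sub_nonneg.mpr hyx) ha0.le)
          (Real.one_lt_exp_iff.mpr (by positivity)) hD
    _ = 15 * σ / R * Real.exp (2 * R) / a := by
        rw [hlen, Real.log_exp]
        field_simp
        norm_num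

theorem IsPiltzDominated.sum_le_of_lt_log_cutPrime (hf : IsPiltzDominated k f) (hk : 0 < k)
    (hR : 0 < R) {σ : ℝ} (hσ : 1 ≤ σ) (hyx : Real.exp (2 * R) ≤ x)
    (hx : Real.log x ≤ 2 * ℓ * R) (hN : N ⊆ Ioc ⌊x - Real.exp (2 * R)⌋₊ ⌊x⌋₊)
    (hp : ∀ n ∈ N, R / σ < Real.log (cutPrime ⌊Real.exp R⌋₊ n)) :
    ∑ n ∈ N, f n ≤ 30 * ℓ * σ * (k : ℝ) ^ (2 * ℓ * σ) * (Real.exp (2 * R) / Real.log x) *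
      ∑ a ∈ N.image (smoothPart ⌊Real.exp R⌋₊), f a / a := by
  have hZ := floor_exp_pos hR
  have : 0 < σ := by linarith
  have hx0 : 0 < x := (Real.exp_pos _).trans_le hyx
  have hlogx : 0 < Real.log x := by linarith [(Real.le_log_iff_exp_le hx0).mpr hyx]
  have hN0 : ∀ n ∈ N, n ≠ 0 := fun n hn => (mem_Ioc.mp (hN hn)).1.ne_bot
  have himage := image_smoothPart_subset hZ hN0
  have hsum : 0 ≤ ∑ a ∈ N.image (smoothPart ⌊Real.exp R⌋₊), f a / a := sum_nonneg fun a ha =>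
    div_nonneg (hf.nonneg a (mem_Ioc.mp (himage ha)).1) a.cast_nonneg
  have hpiltz : ∀ n ∈ N, (piltz k (roughPart ⌊Real.exp R⌋₊ n) : ℝ) ≤ (k : ℝ) ^ (2 * ℓ * σ) := by
    intro n hn
    have hb := roughPart_ne_zero hZ (hN0 n hn)
    have hbx : (roughPart ⌊Real.exp R⌋₊ n : ℝ) ≤ x := (Nat.le_floor_iff hx0.le).mp
      (roughPart_le.trans (mem_Ioc.mp (hN hn)).2)
    have hexponent : 2 * ℓ * R / (R / σ) = 2 * ℓ * σ := by field_simp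
    rw [← hexponent]
    refine piltz_le_rpow_div_log_minFac hk hb (by positivity) (hp n hn).le (le_trans ?_ hx)
    exact Real.log_le_log (Nat.cast_pos.mpr (Nat.pos_of_ne_zero hb)) hbx
  have hdensity : 15 * σ / R ≤ 30 * ℓ * σ / Real.log x := by
    rw [div_le_div_iff₀ hR hlogx]
    nlinarith
  calc ∑ n ∈ N, f n ≤ (k : ℝ) ^ (2 * ℓ * σ) * (15 * σ / R * Real.exp (2 * R)) *
        ∑ a ∈ N.image (smoothPart ⌊Real.exp R⌋₊), f a / a :=
        hf.sum_le_of_card_fiber_le hZ hN0 hpiltz fun a ha =>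
          card_fiber_smoothPart_le_of_lt_log_cutPrime hR hσ hyx hN hp
            (mem_Ioc.mp (himage ha)).1 (mem_Ioc.mp (himage ha)).2
    _ ≤ (k : ℝ) ^ (2 * ℓ * σ) * (30 * ℓ * σ / Real.log x * Real.exp (2 * R)) *
        ∑ a ∈ N.image (smoothPart ⌊Real.exp R⌋₊), f a / a := by gcongr
    _ = _ := by ring

theorem exp_rankinParam_mul_le (hk : 0 < k) (ℓ : ℝ) (s : ℕ) :
    Real.exp (-(rankinParam k ℓ * s / 2)) ≤ (k : ℝ) ^ (-(2 * ℓ * s)) * (4 / 5) ^ s := by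
  have hsplit : -(rankinParam k ℓ * s / 2) = Real.log k * -(2 * ℓ * s) + s * -(1 / 4) := by
    rw [rankinParam]
    ring
  rw [hsplit, Real.exp_add, Real.exp_nat_mul, Real.rpow_def_of_pos (Nat.cast_pos.mpr hk)]
  gcongr
  rw [Real.exp_neg, inv_le_comm₀ (Real.exp_pos _) (by norm_num)]
  linarith [Real.add_one_le_exp (1 / 4 : ℝ)]

theorem IsPiltzDominated.sum_le_of_log_cutPrime_class (hf : IsPiltzDominated k f) (hk : 0 < k)
    (hℓ : 0 ≤ ℓ) (hR : 0 < R) (hyx : Real.exp (2 * R) ≤ x) (hx : Real.log x ≤ 2 * ℓ * R)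
    (hN : N ⊆ Ioc ⌊x - Real.exp (2 * R)⌋₊ ⌊x⌋₊) (hNR : ∀ n ∈ N, ⌊Real.exp R⌋₊ < n) {s : ℕ}
    (hs : 2 ≤ s) (hKs : 2 * rankinParam k ℓ ≤ R / s)
    (hlower : ∀ n ∈ N, R / (s + 1) < Real.log (cutPrime ⌊Real.exp R⌋₊ n))
    (hupper : ∀ n ∈ N, Real.log (cutPrime ⌊Real.exp R⌋₊ n) ≤ R / s) :
    ∑ n ∈ N, f n ≤ ((s : ℝ) + 1) * (4 / 5) ^ s *
      (30 * ℓ * (k : ℝ) ^ (2 * ℓ) * Real.exp (rankinExponent k (rankinParam k ℓ)) *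
        (Real.exp (2 * R) / Real.log x) * ∑ a ∈ Ioc 0 ⌊Real.exp R⌋₊, f a / a) := by
  have hk0 : (0 : ℝ) < k := Nat.cast_pos.mpr hk
  have hs2 : (2 : ℝ) ≤ s := Nat.ofNat_le_cast.mpr hs
  have hlogx : 0 < Real.log x := by
    linarith [(Real.le_log_iff_exp_le ((Real.exp_pos _).trans_le hyx)).mpr hyx]
  have hF := hf.sum_div_nonneg ⌊Real.exp R⌋₊
  have hexponent : rankinParam k ℓ * R / (2 * (R / s)) = rankinParam k ℓ * s / 2 := by field_simp
  have hsmooth := hf.sum_image_smoothPart_le (half_le_rankinParam hℓ) hKs hR hNR hupper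
    fun n hn => (hupper n hn).trans (by gcongr)
  rw [hexponent] at hsmooth
  have hcancel : (k : ℝ) ^ (2 * ℓ * ((s : ℝ) + 1)) * (k : ℝ) ^ (-(2 * ℓ * s)) =
      (k : ℝ) ^ (2 * ℓ) := by
    rw [← Real.rpow_add hk0]
    ring_nf
  calc ∑ n ∈ N, f n
      ≤ 30 * ℓ * ((s : ℝ) + 1) * (k : ℝ) ^ (2 * ℓ * ((s : ℝ) + 1)) *
        (Real.exp (2 * R) / Real.log x) * ∑ a ∈ N.image (smoothPart ⌊Real.exp R⌋₊), f a / a :=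
        hf.sum_le_of_lt_log_cutPrime hk hR (by linarith) hyx hx hN hlower
    _ ≤ 30 * ℓ * ((s : ℝ) + 1) * (k : ℝ) ^ (2 * ℓ * ((s : ℝ) + 1)) *
        (Real.exp (2 * R) / Real.log x) * ((k : ℝ) ^ (-(2 * ℓ * s)) * (4 / 5) ^ s *
          Real.exp (rankinExponent k (rankinParam k ℓ)) *
          ∑ a ∈ Ioc 0 ⌊Real.exp R⌋₊, f a / a) := by
        gcongr
        refine hsmooth.trans ?_
        gcongr
        exact exp_rankinParam_mul_le hk ℓ s
    _ = _ := by
        rw [← hcancel]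
        ring

theorem IsPiltzDominated.sum_le_of_log_cutPrime_mem_Ioc (hf : IsPiltzDominated k f) (hk : 0 < k)
    (hℓ : 0 ≤ ℓ) (hR : 0 < R) (hyx : Real.exp (2 * R) ≤ x) (hx : Real.log x ≤ 2 * ℓ * R)
    (hN : N ⊆ Ioc ⌊x - Real.exp (2 * R)⌋₊ ⌊x⌋₊) (hNR : ∀ n ∈ N, ⌊Real.exp R⌋₊ < n)
    (hp : ∀ n ∈ N, Real.log (cutPrime ⌊Real.exp R⌋₊ n) ∈
      Set.Ioc (2 * rankinParam k ℓ) (R / 2)) :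
    ∑ n ∈ N, f n ≤ 750 * ℓ * (k : ℝ) ^ (2 * ℓ) *
      Real.exp (rankinExponent k (rankinParam k ℓ)) *
      (Real.exp (2 * R) / Real.log x) * ∑ a ∈ Ioc 0 ⌊Real.exp R⌋₊, f a / a := by
  set M := 30 * ℓ * (k : ℝ) ^ (2 * ℓ) * Real.exp (rankinExponent k (rankinParam k ℓ)) *
    (Real.exp (2 * R) / Real.log x) * ∑ a ∈ Ioc 0 ⌊Real.exp R⌋₊, f a / a
  have hM : 0 ≤ M := by
    have := hf.sum_div_nonneg ⌊Real.exp R⌋₊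
    have : 0 < Real.log x := by
      linarith [(Real.le_log_iff_exp_le ((Real.exp_pos _).trans_le hyx)).mpr hyx]
    positivity
  set q : ℕ → ℝ := fun n => Real.log (cutPrime ⌊Real.exp R⌋₊ n)
  set σ : ℕ → ℕ := fun n => ⌊R / q n⌋₊
  have hK := half_le_rankinParam (k := k) hℓ
  have hq : ∀ n ∈ N, 0 < q n := fun n hn => lt_trans (by linarith) (hp n hn).1
  have htwo : ∀ n ∈ N, 2 ≤ σ n := fun n hn => Nat.le_floor <| by
    rw [Nat.cast_ofNat, le_div_iff₀ (hq n hn)]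
    linarith [(hp n hn).2]
  have hlower : ∀ n ∈ N, R / (σ n + 1) < q n := fun n hn => by
    rw [div_lt_comm₀ (by positivity) (hq n hn)]
    exact Nat.lt_floor_add_one _
  have hupper : ∀ n ∈ N, q n ≤ R / σ n := fun n hn => by
    rw [le_div_comm₀ (hq n hn) (Nat.cast_pos.mpr (two_pos.trans_le (htwo n hn)))]
    exact Nat.floor_le (div_pos hR (hq n hn)).le
  have hclass : ∀ s ∈ N.image σ, ∑ n ∈ N with σ n = s, f n ≤ ((s : ℝ) + 1) * (4 / 5) ^ s * M := by
    intro s hs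
    obtain ⟨m, hm, rfl⟩ := mem_image.mp hs
    refine hf.sum_le_of_log_cutPrime_class hk hℓ hR hyx hx ((filter_subset _ _).trans hN)
      (fun n hn => hNR n (mem_filter.mp hn).1) (htwo m hm) ((hp m hm).1.le.trans (hupper m hm))
      (fun n hn => ?_) fun n hn => ?_ <;>
    obtain ⟨hnN, hnm⟩ := mem_filter.mp hn <;> rw [← hnm]
    exacts [hlower n hnN, hupper n hnN]
  calc ∑ n ∈ N, f n = ∑ s ∈ N.image σ, ∑ n ∈ N with σ n = s, f n :=
        (sum_fiberwise_of_maps_to (fun n hn => mem_image_of_mem σ hn) f).symm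
    _ ≤ ∑ s ∈ N.image σ, ((s : ℝ) + 1) * (4 / 5) ^ s * M := sum_le_sum hclass
    _ ≤ 25 * M := by
        rw [← sum_mul]
        gcongr
        exact sum_add_one_mul_four_fifths_pow_le _
    _ = _ := by ring

theorem card_fiber_smoothPart_le_two_mul (hR : 0 < R) (hyx : Real.exp (2 * R) ≤ x)
    (hN : N ⊆ Ioc ⌊x - Real.exp (2 * R)⌋₊ ⌊x⌋₊) {a : ℕ} (ha : 0 < a)
    (haR : a ≤ ⌊Real.exp R⌋₊) :
    (#{n ∈ N | smoothPart ⌊Real.exp R⌋₊ n = a} : ℝ) ≤ 2 * Real.exp (2 * R) / a := by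
  have ha0 : (0 : ℝ) < a := Nat.cast_pos.mpr ha
  have hlen : x / a - (x - Real.exp (2 * R)) / a = Real.exp (2 * R) / a := by ring
  have hone : 1 ≤ x / a - (x - Real.exp (2 * R)) / a := by
    rw [hlen, one_le_div ha0]
    exact ((Nat.le_floor_iff (Real.exp_pos R).le).mp haR).trans
      (Real.exp_le_exp.mpr (by linarith))
  have hcard := card_fiber_smoothPart_le (floor_exp_pos hR) hN (Q := fun _ => True) (a := a)
    fun _ _ => trivial
  rw [filter_true] at hcard
  calc (#{n ∈ N | smoothPart ⌊Real.exp R⌋₊ n = a} : ℝ)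
      ≤ #(Ioc ⌊(x - Real.exp (2 * R)) / a⌋₊ ⌊x / a⌋₊) := Nat.cast_le.mpr hcard
    _ ≤ 2 * (x / a - (x - Real.exp (2 * R)) / a) :=
        card_Ioc_floor_le (div_nonneg (sub_nonneg.mpr hyx) ha0.le) hone
    _ = 2 * Real.exp (2 * R) / a := by rw [hlen, mul_div_assoc]

theorem rpow_mul_exp_neg_le_inv_log (hℓ : 0 < ℓ) (hx0 : 0 < x) (hlogx : 0 < Real.log x)
    (hx : Real.log x ≤ 2 * ℓ * R) (hloglog : Real.log (Real.log x) ≤ Real.log x / (40 * ℓ)) :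
    x ^ (1 / (10 * ℓ)) * Real.exp (-(R / 4)) ≤ 1 / Real.log x := by
  have hquarter : Real.log x / (8 * ℓ) ≤ R / 4 := by
    rw [div_le_iff₀ (by positivity)]
    linarith
  have hsplit : Real.log x * (1 / (10 * ℓ)) = Real.log x / (8 * ℓ) - Real.log x / (40 * ℓ) := by
    field_simp
    ring
  calc x ^ (1 / (10 * ℓ)) * Real.exp (-(R / 4))
      = Real.exp (Real.log x / (8 * ℓ) - Real.log x / (40 * ℓ) + -(R / 4)) := by
        rw [Real.rpow_def_of_pos hx0, ← Real.exp_add, hsplit]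
    _ ≤ Real.exp (-Real.log (Real.log x)) := Real.exp_le_exp.mpr (by linarith)
    _ = 1 / Real.log x := by rw [Real.exp_neg, Real.exp_log hlogx, one_div]

theorem piltz_le_mul_rpow_one_div_ten_mul (hk : 0 < k) (hℓ : 1 ≤ ℓ) {n : ℕ} (hn : n ≠ 0)
    (hnx : (n : ℝ) ≤ x) :
    (piltz k n : ℝ) ≤ (15 * ℓ * k) ^ (k * (k : ℝ) ^ (10 * ℓ)) * x ^ (1 / (10 * ℓ)) := by
  have hbase : 3 / 2 * (k : ℝ) / (1 / (10 * ℓ)) = 15 * ℓ * k := by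
    field_simp
    norm_num
  have hbound := piltz_le_rpow_mul hk hn (ε := 1 / (10 * ℓ)) (by positivity)
    ((div_le_one (by positivity)).mpr (by linarith))
  rw [one_div_one_div, hbase] at hbound
  exact hbound.trans (by gcongr)

theorem IsPiltzDominated.sum_le_of_log_cutPrime_le (hf : IsPiltzDominated k f) (hk : 0 < k)
    (hℓ : 1 ≤ ℓ) {K : ℝ} (hK : 1 / 2 ≤ K) (hR : 0 < R) (hyx : Real.exp (2 * R) ≤ x)
    (hx : Real.log x ≤ 2 * ℓ * R) (hloglog : Real.log (Real.log x) ≤ Real.log x / (40 * ℓ))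
    (hN : N ⊆ Ioc ⌊x - Real.exp (2 * R)⌋₊ ⌊x⌋₊) (hNR : ∀ n ∈ N, ⌊Real.exp R⌋₊ < n)
    (hpK : ∀ n ∈ N, Real.log (cutPrime ⌊Real.exp R⌋₊ n) ≤ 2 * K)
    (hpR : ∀ n ∈ N, Real.log (cutPrime ⌊Real.exp R⌋₊ n) ≤ R / 2) :
    ∑ n ∈ N, f n ≤ 2 * (15 * ℓ * k) ^ (k * (k : ℝ) ^ (10 * ℓ)) *
      Real.exp (rankinExponent k K) * (Real.exp (2 * R) / Real.log x) *
      ∑ a ∈ Ioc 0 ⌊Real.exp R⌋₊, f a / a := by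
  have hZ := floor_exp_pos hR
  have hN0 : ∀ n ∈ N, n ≠ 0 := fun n hn => (hNR n hn).ne_bot
  have himage := image_smoothPart_subset hZ hN0
  have hF := hf.sum_div_nonneg ⌊Real.exp R⌋₊
  have hx0 : 0 < x := (Real.exp_pos _).trans_le hyx
  have hlogx : 0 < Real.log x := by linarith [(Real.le_log_iff_exp_le hx0).mpr hyx]
  set C := (15 * ℓ * k) ^ (k * (k : ℝ) ^ (10 * ℓ))
  have : 0 ≤ C := by positivity
  have hpiltz : ∀ n ∈ N, (piltz k (roughPart ⌊Real.exp R⌋₊ n) : ℝ) ≤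
      C * x ^ (1 / (10 * ℓ)) :=
    fun n hn => piltz_le_mul_rpow_one_div_ten_mul hk hℓ (roughPart_ne_zero hZ (hN0 n hn))
      ((Nat.le_floor_iff hx0.le).mp (roughPart_le.trans (mem_Ioc.mp (hN hn)).2))
  have hexponent : K * R / (2 * (2 * K)) = R / 4 := by field_simp; norm_num
  have hsmooth := hf.sum_image_smoothPart_le hK le_rfl hR hNR hpK hpR
  rw [hexponent] at hsmooth
  calc ∑ n ∈ N, f n
      ≤ C * x ^ (1 / (10 * ℓ)) * (2 * Real.exp (2 * R)) *
        ∑ a ∈ N.image (smoothPart ⌊Real.exp R⌋₊), f a / a :=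
        hf.sum_le_of_card_fiber_le hZ hN0 hpiltz fun a ha =>
          card_fiber_smoothPart_le_two_mul hR hyx hN (mem_Ioc.mp (himage ha)).1
            (mem_Ioc.mp (himage ha)).2
    _ ≤ C * x ^ (1 / (10 * ℓ)) * (2 * Real.exp (2 * R)) * (Real.exp (-(R / 4)) *
        Real.exp (rankinExponent k K) * ∑ a ∈ Ioc 0 ⌊Real.exp R⌋₊, f a / a) := by gcongr
    _ = 2 * C * Real.exp (rankinExponent k K) * Real.exp (2 * R) *
        (x ^ (1 / (10 * ℓ)) * Real.exp (-(R / 4))) *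
        ∑ a ∈ Ioc 0 ⌊Real.exp R⌋₊, f a / a := by ring
    _ ≤ 2 * C * Real.exp (rankinExponent k K) * Real.exp (2 * R) * (1 / Real.log x) *
        ∑ a ∈ Ioc 0 ⌊Real.exp R⌋₊, f a / a := by
        gcongr
        exact rpow_mul_exp_neg_le_inv_log (by linarith) hx0 hlogx hx hloglog
    _ = _ := by ring

theorem IsPiltzDominated.sum_le_of_le_floor (hf : IsPiltzDominated k f) {z : ℝ} (hz : 0 ≤ z)
    (hN : N ⊆ Ioc 0 ⌊z⌋₊) : ∑ n ∈ N, f n ≤ z * ∑ a ∈ Ioc 0 ⌊z⌋₊, f a / a := by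
  have hterm : ∀ n ∈ Ioc 0 ⌊z⌋₊, 0 ≤ f n / n := fun n hn =>
    div_nonneg (hf.nonneg n (mem_Ioc.mp hn).1) n.cast_nonneg
  calc ∑ n ∈ N, f n = ∑ n ∈ N, n * (f n / n) := sum_congr rfl fun n hn =>
        (mul_div_cancel₀ _ (Nat.cast_ne_zero.mpr (mem_Ioc.mp (hN hn)).1.ne')).symm
    _ ≤ ∑ n ∈ N, z * (f n / n) := sum_le_sum fun n hn => mul_le_mul_of_nonneg_right
        ((Nat.le_floor_iff hz).mp (mem_Ioc.mp (hN hn)).2) (hterm n (hN hn))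
    _ ≤ z * ∑ a ∈ Ioc 0 ⌊z⌋₊, f a / a := by
        rw [← mul_sum]
        gcongr
        exact fun n hn _ => hterm n hn

theorem log_le_exp_of_log_log_le (hℓ : 1 ≤ ℓ) (hlogx : 0 < Real.log x)
    (hx : Real.log x ≤ 2 * ℓ * R) (hloglog : Real.log (Real.log x) ≤ Real.log x / (40 * ℓ)) :
    Real.log x ≤ Real.exp R := by
  rw [← Real.log_le_iff_le_exp hlogx]
  refine hloglog.trans ((div_le_iff₀ (by positivity)).mpr ?_)
  nlinarith

theorem IsPiltzDominated.sum_le_of_half_lt_log_cutPrime (hf : IsPiltzDominated k f) (hk : 0 < k)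
    (hℓ : 0 ≤ ℓ) (hR : 0 < R) (hyx : Real.exp (2 * R) ≤ x) (hx : Real.log x ≤ 2 * ℓ * R)
    (hN : N ⊆ Ioc ⌊x - Real.exp (2 * R)⌋₊ ⌊x⌋₊)
    (hp : ∀ n ∈ N, R / 2 < Real.log (cutPrime ⌊Real.exp R⌋₊ n)) :
    ∑ n ∈ N, f n ≤ 60 * ℓ * (k : ℝ) ^ (4 * ℓ) * (Real.exp (2 * R) / Real.log x) *
      ∑ a ∈ Ioc 0 ⌊Real.exp R⌋₊, f a / a := by
  have hlogx : 0 ≤ Real.log x := Real.log_nonneg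
    ((Real.one_le_exp (by positivity)).trans hyx)
  have hN0 : ∀ n ∈ N, n ≠ 0 := fun n hn => (mem_Ioc.mp (hN hn)).1.ne_bot
  have himage : ∑ a ∈ N.image (smoothPart ⌊Real.exp R⌋₊), f a / a ≤
      ∑ a ∈ Ioc 0 ⌊Real.exp R⌋₊, f a / a :=
    sum_le_sum_of_subset_of_nonneg (image_smoothPart_subset (floor_exp_pos hR) hN0)
      fun a ha _ => div_nonneg (hf.nonneg a (mem_Ioc.mp ha).1) a.cast_nonneg
  have hsum := hf.sum_le_of_lt_log_cutPrime hk hR one_le_two hyx hx hN hp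
  rw [show 30 * ℓ * 2 = 60 * ℓ by ring, show 2 * ℓ * 2 = 4 * ℓ by ring] at hsum
  exact hsum.trans (by gcongr)

/-- The constant produced by the method. Its four terms account for the `n ≤ √y`, and for the
larger `n` whose cut prime is respectively large, intermediate and bounded. -/
noncomputable def shortSumConstant (k : ℕ) (ℓ : ℝ) : ℝ :=
  1 + 60 * ℓ * (k : ℝ) ^ (4 * ℓ) +
    750 * ℓ * (k : ℝ) ^ (2 * ℓ) * Real.exp (rankinExponent k (rankinParam k ℓ)) +
    2 * (15 * ℓ * k) ^ (k * (k : ℝ) ^ (10 * ℓ)) * Real.exp (rankinExponent k (rankinParam k ℓ))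

theorem IsPiltzDominated.sum_Ioc_floor_sub_exp_le (hf : IsPiltzDominated k f) (hk : 0 < k)
    (hℓ : 1 ≤ ℓ) (hR : 0 < R) (hyx : Real.exp (2 * R) ≤ x) (hx : Real.log x ≤ 2 * ℓ * R)
    (hloglog : Real.log (Real.log x) ≤ Real.log x / (40 * ℓ)) :
    ∑ n ∈ Ioc ⌊x - Real.exp (2 * R)⌋₊ ⌊x⌋₊, f n ≤
      shortSumConstant k ℓ * (Real.exp (2 * R) / Real.log x) *
        ∑ a ∈ Ioc 0 ⌊Real.exp R⌋₊, f a / a := by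
  set I := Ioc ⌊x - Real.exp (2 * R)⌋₊ ⌊x⌋₊
  set q : ℕ → ℝ := fun n => Real.log (cutPrime ⌊Real.exp R⌋₊ n)
  have hℓ0 : 0 ≤ ℓ := by linarith
  have hlogx : 0 < Real.log x := by
    linarith [(Real.le_log_iff_exp_le ((Real.exp_pos _).trans_le hyx)).mpr hyx]
  have hsmall : ∑ n ∈ I with n ≤ ⌊Real.exp R⌋₊, f n ≤
      Real.exp (2 * R) / Real.log x * ∑ a ∈ Ioc 0 ⌊Real.exp R⌋₊, f a / a := by
    refine (hf.sum_le_of_le_floor (Real.exp_pos R).le fun n hn => ?_).trans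
      (mul_le_mul_of_nonneg_right ?_ (hf.sum_div_nonneg _))
    · obtain ⟨hnI, hnR⟩ := mem_filter.mp hn
      exact mem_Ioc.mpr ⟨Nat.zero_lt_of_lt (mem_Ioc.mp hnI).1, hnR⟩
    · rw [le_div_iff₀ hlogx, two_mul, Real.exp_add]
      gcongr
      exact log_le_exp_of_log_log_le hℓ hlogx hx hloglog
  have hlarge := hf.sum_le_of_half_lt_log_cutPrime hk hℓ0 hR hyx hx
    (N := {n ∈ I | ¬ n ≤ ⌊Real.exp R⌋₊ ∧ ¬ q n ≤ R / 2})
    (filter_subset _ _) fun n hn => not_le.mp (mem_filter.mp hn).2.2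
  have hmiddle := hf.sum_le_of_log_cutPrime_mem_Ioc hk hℓ0 hR hyx hx
    (N := {n ∈ I | ¬ n ≤ ⌊Real.exp R⌋₊ ∧ q n ≤ R / 2 ∧ ¬ q n ≤ 2 * rankinParam k ℓ})
    (filter_subset _ _) (fun n hn => not_le.mp (mem_filter.mp hn).2.1)
    fun n hn => ⟨not_le.mp (mem_filter.mp hn).2.2.2, (mem_filter.mp hn).2.2.1⟩
  have hbounded := hf.sum_le_of_log_cutPrime_le hk hℓ (half_le_rankinParam hℓ0) hR hyx hx hloglog
    (N := {n ∈ I | ¬ n ≤ ⌊Real.exp R⌋₊ ∧ q n ≤ R / 2 ∧ q n ≤ 2 * rankinParam k ℓ})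
    (filter_subset _ _) (fun n hn => not_le.mp (mem_filter.mp hn).2.1)
    (fun n hn => (mem_filter.mp hn).2.2.2) fun n hn => (mem_filter.mp hn).2.2.1
  rw [← sum_filter_add_sum_filter_not I (· ≤ ⌊Real.exp R⌋₊),
    ← sum_filter_add_sum_filter_not {n ∈ I | ¬ n ≤ ⌊Real.exp R⌋₊} (q · ≤ R / 2),
    ← sum_filter_add_sum_filter_not {n ∈ {n ∈ I | ¬ n ≤ ⌊Real.exp R⌋₊} | q n ≤ R / 2}
      (q · ≤ 2 * rankinParam k ℓ)]
  simp only [filter_filter, and_assoc]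
  refine (add_le_add hsmall (add_le_add (add_le_add hbounded hmiddle) hlarge)).trans_eq ?_
  rw [shortSumConstant]
  ring

theorem IsPiltzDominated.sum_Ioc_floor_sub_le (hf : IsPiltzDominated k f) (hk : 0 < k)
    (hℓ : 1 ≤ ℓ) {y : ℝ} (hx : Real.exp (6400 * ℓ ^ 2) ≤ x) (hxy : x ^ (1 / ℓ) ≤ y)
    (hyx : y ≤ x) :
    ∑ n ∈ Ioc ⌊x - y⌋₊ ⌊x⌋₊, f n ≤
      shortSumConstant k ℓ * (y / Real.log x) * ∑ a ∈ Ioc 0 ⌊x⌋₊, f a / a := by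
  have hx0 : 0 < x := (Real.exp_pos _).trans_le hx
  have hlogx : 6400 * ℓ ^ 2 ≤ Real.log x := (Real.le_log_iff_exp_le hx0).mpr hx
  have hlogx0 : 0 < Real.log x := by nlinarith
  have hy0 : 0 < y := (Real.rpow_pos_of_pos hx0 _).trans_le hxy
  obtain ⟨R, rfl⟩ : ∃ R, Real.exp (2 * R) = y :=
    ⟨Real.log y / 2, by rw [mul_div_cancel₀ _ two_ne_zero, Real.exp_log hy0]⟩
  have hlogR : Real.log x ≤ 2 * ℓ * R := by
    have hlog := Real.log_le_log (Real.rpow_pos_of_pos hx0 _) hxy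
    rw [Real.log_rpow hx0, Real.log_exp, one_div, inv_mul_le_iff₀ (by linarith)] at hlog
    linarith
  have hR : 0 < R := pos_of_mul_pos_right (hlogx0.trans_le hlogR) (by linarith)
  refine (hf.sum_Ioc_floor_sub_exp_le hk hℓ hR hyx hlogR
    (log_log_le (by linarith) hlogx)).trans ?_
  have hC : 0 ≤ shortSumConstant k ℓ := by
    rw [shortSumConstant]
    positivity
  gcongr
  · exact fun a ha _ => div_nonneg (hf.nonneg a (mem_Ioc.mp ha).1) a.cast_nonneg
  · exact (Real.exp_le_exp.mpr (by linarith)).trans hyx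

end ShortSums

section Constants

variable {k : ℕ} {ℓ : ℝ}

theorem rankinExponent_rankinParam_le (hk : 0 < k) (hℓ : 0 ≤ ℓ) :
    rankinExponent k (rankinParam k ℓ) ≤ 14 / 5 * (7 / 2) ^ k * ((k : ℝ) ^ (4 * ℓ)) ^ 2 := by
  have hexp_half : Real.exp (1 / 2) ≤ 5 / 3 := by
    have hsq : Real.exp (1 / 2) * Real.exp (1 / 2) = Real.exp 1 := by
      rw [← Real.exp_add, add_halves]
    nlinarith [Real.exp_one_lt_d9, Real.exp_pos (1 / 2 : ℝ)]
  set Q := (k : ℝ) ^ (4 * ℓ)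
  have hQ : 1 ≤ Q := Real.one_le_rpow (Nat.one_le_cast.mpr hk) (by positivity)
  have hlogQ : 4 * ℓ * Real.log k = Real.log Q := (Real.log_rpow (Nat.cast_pos.mpr hk) _).symm
  have hlog := Real.log_le_sub_one_of_pos (zero_lt_one.trans_le hQ)
  have : 0 ≤ Real.log Q := Real.log_nonneg hQ
  rw [rankinExponent, rankinParam, hlogQ, Real.exp_add, Real.exp_log (by linarith)]
  calc 7 / 5 * (7 / 2 : ℝ) ^ k * ((Real.log Q + 1 / 2 + 7 / 10) * (Q * Real.exp (1 / 2)))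
      ≤ 7 / 5 * (7 / 2 : ℝ) ^ k * ((6 / 5 * Q) * (Q * (5 / 3))) := by
        gcongr
        linarith
    _ = 14 / 5 * (7 / 2) ^ k * Q ^ 2 := by ring

theorem mul_pow_le_Ak (hk : 0 < k) : 1092 * (125 / 8) ^ k ≤ Ak k := by
  have hcube : (k : ℝ) ^ 3 ≤ 8 ^ k := by
    calc (k : ℝ) ^ 3 ≤ (2 ^ k) ^ 3 := by
          gcongr
          exact_mod_cast Nat.lt_two_pow_self.le
      _ = 8 ^ k := by rw [← pow_mul, mul_comm, pow_mul]; norm_num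
  rw [Ak, le_div_iff₀ (by positivity)]
  calc 1092 * (125 / 8 : ℝ) ^ k * (k : ℝ) ^ 3 ≤ 1092 * (125 / 8 : ℝ) ^ k * 8 ^ k := by gcongr
    _ = 125 ^ k * 1092 := by rw [mul_assoc, ← mul_pow]; norm_num; ring

theorem one_le_Ak (hk : 0 < k) : 1 ≤ Ak k := by
  linarith [mul_pow_le_Ak hk, one_le_pow₀ (n := k) (show (1 : ℝ) ≤ 125 / 8 by norm_num)]

theorem Ckl_nonneg (hk : 0 < k) (hℓ : 0 ≤ ℓ) : 0 ≤ Ckl k ℓ :=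
  Real.rpow_nonneg (mul_nonneg (by positivity) (sub_nonneg.mpr (Nat.one_le_cast.mpr hk))) _

theorem Ak_mul_max_le_Dkl (hk : 0 < k) :
    Ak k * max (Ak k) (2 * (k : ℝ) ^ (5 * ℓ * Ak k)) ≤ Dkl k ℓ := by
  have hA : 0 ≤ Ak k := zero_le_one.trans (one_le_Ak hk)
  have hterm : 0 ≤ (2 * Ak k) ^ (-(Ak k) / 4) * Real.exp (Bkl k ℓ / Real.exp 1) *
      (k : ℝ) ^ (5 * ℓ * Bkl k ℓ) * (if Ak k < Bkl k ℓ then 1 else 0) :=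
    mul_nonneg (by positivity) (by split_ifs <;> norm_num)
  rw [Dkl]
  linarith

theorem Ak_sq_le_Dkl (hk : 0 < k) : Ak k ^ 2 ≤ Dkl k ℓ := by
  refine le_trans ?_ (Ak_mul_max_le_Dkl hk)
  rw [sq]
  exact mul_le_mul_of_nonneg_left (le_max_left _ _) (zero_le_one.trans (one_le_Ak hk))

theorem mul_Ckl_add_mul_Dkl_le_Lam (hℓ : 0 ≤ ℓ) : 5 * ℓ * Ckl k ℓ + 9 * ℓ * Dkl k ℓ ≤ Lam k ℓ := by
  have : 0 ≤ 12 * ℓ * (k : ℝ) ^ (6 * ℓ) := by positivity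
  rw [Lam]
  linarith

theorem exp_two_le_ten : Real.exp 2 ≤ 10 := by
  have hsq : Real.exp 2 = Real.exp 1 * Real.exp 1 := by
    rw [← Real.exp_add, one_add_one_eq_two]
  nlinarith [Real.exp_one_lt_d9, Real.exp_pos 1]

theorem exp_two_mul_rpow_le_Ckl (hk : 2 ≤ k) (hℓ : 1 ≤ ℓ) :
    Real.exp (2 * (k : ℝ) ^ (16 * ℓ)) ≤ Ckl k ℓ := by
  have hk2 : (2 : ℝ) ≤ k := Nat.ofNat_le_cast.mpr hk
  have hP : 0 ≤ (k : ℝ) ^ (16 * ℓ) := by positivity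
  have hbase : 10 ≤ 10 * ℓ * ((k : ℝ) - 1) := by nlinarith
  calc Real.exp (2 * (k : ℝ) ^ (16 * ℓ)) = Real.exp 2 ^ (k : ℝ) ^ (16 * ℓ) := Real.exp_mul _ _
    _ ≤ (10 * ℓ * ((k : ℝ) - 1)) ^ (k : ℝ) ^ (16 * ℓ) :=
        Real.rpow_le_rpow (Real.exp_pos 2).le (exp_two_le_ten.trans hbase) hP
    _ ≤ Ckl k ℓ := Real.rpow_le_rpow_of_exponent_le (by linarith)
        (le_mul_of_one_le_right hP (by linarith))

theorem exp_two_mul_Ak_le_Dkl (hk : 2 ≤ k) (hℓ : 1 ≤ ℓ) : Real.exp (2 * Ak k) ≤ Dkl k ℓ := by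
  have hk2 : (2 : ℝ) ≤ k := Nat.ofNat_le_cast.mpr hk
  have hA : 1 ≤ Ak k := one_le_Ak (by lia)
  have hpow : 0 ≤ (k : ℝ) ^ (5 * ℓ * Ak k) := by positivity
  calc Real.exp (2 * Ak k) = Real.exp 2 ^ Ak k := Real.exp_mul _ _
    _ ≤ (2 ^ (5 : ℝ)) ^ Ak k := by
        gcongr
        exact exp_two_le_ten.trans (by norm_num)
    _ = 2 ^ (5 * Ak k) := (Real.rpow_mul zero_le_two _ _).symm
    _ ≤ (k : ℝ) ^ (5 * Ak k) := by gcongr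
    _ ≤ (k : ℝ) ^ (5 * ℓ * Ak k) :=
        Real.rpow_le_rpow_of_exponent_le (by linarith) (by nlinarith)
    _ ≤ 2 * (k : ℝ) ^ (5 * ℓ * Ak k) := le_mul_of_one_le_left hpow one_le_two
    _ ≤ max (Ak k) (2 * (k : ℝ) ^ (5 * ℓ * Ak k)) := le_max_right _ _
    _ ≤ Ak k * max (Ak k) (2 * (k : ℝ) ^ (5 * ℓ * Ak k)) :=
        le_mul_of_one_le_left (le_max_of_le_left (by linarith)) hA
    _ ≤ Dkl k ℓ := Ak_mul_max_le_Dkl (by lia)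

theorem mul_exp_max_le_Lam (hk : 2 ≤ k) (hℓ : 1 ≤ ℓ) :
    5 * ℓ * Real.exp (2 * max (Ak k) ((k : ℝ) ^ (16 * ℓ))) ≤ Lam k ℓ := by
  have hℓ0 : 0 ≤ ℓ := by linarith
  have hC := exp_two_mul_rpow_le_Ckl hk hℓ
  have hD := exp_two_mul_Ak_le_Dkl hk hℓ
  have hmax : Real.exp (2 * max (Ak k) ((k : ℝ) ^ (16 * ℓ))) ≤ Ckl k ℓ + Dkl k ℓ := by
    rcases max_choice (Ak k) ((k : ℝ) ^ (16 * ℓ)) with h | h <;> rw [h]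
    · linarith [Real.exp_pos (2 * (k : ℝ) ^ (16 * ℓ))]
    · linarith [Real.exp_pos (2 * Ak k)]
  have hD0 : 0 ≤ ℓ * Dkl k ℓ := mul_nonneg hℓ0 ((Real.exp_pos _).le.trans hD)
  calc 5 * ℓ * Real.exp (2 * max (Ak k) ((k : ℝ) ^ (16 * ℓ)))
      ≤ 5 * ℓ * (Ckl k ℓ + Dkl k ℓ) := by gcongr
    _ ≤ 5 * ℓ * Ckl k ℓ + 9 * ℓ * Dkl k ℓ := by linarith
    _ ≤ Lam k ℓ := mul_Ckl_add_mul_Dkl_le_Lam hℓ0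

theorem log_fifteen_mul_mul_le (hk : 2 ≤ k) (hℓ : 1 ≤ ℓ) :
    Real.log (15 * ℓ * k) ≤ k * (1 + ℓ) := by
  have hk2 : (2 : ℝ) ≤ k := Nat.ofNat_le_cast.mpr hk
  have hlog15 : Real.log 15 ≤ 3 := by
    rw [Real.log_le_iff_le_exp (by norm_num), ← mul_one (3 : ℝ), ← Nat.cast_ofNat (n := 3),
      Real.exp_nat_mul]
    calc (15 : ℝ) ≤ 2.7 ^ 3 := by norm_num
      _ ≤ Real.exp 1 ^ 3 := by
        gcongr
        linarith [Real.exp_one_gt_d9]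
  rw [Real.log_mul (by positivity) (by positivity), Real.log_mul (by norm_num) (by positivity)]
  have hlogℓ := Real.log_le_sub_one_of_pos (show 0 < ℓ by linarith)
  have hlogk := Real.log_le_sub_one_of_pos (show (0 : ℝ) < k by linarith)
  nlinarith

theorem two_mul_one_add_le_rpow (hk : 2 ≤ k) (hℓ : 1 ≤ ℓ) :
    2 * (1 + ℓ) ≤ (k : ℝ) ^ (6 * ℓ - 2) := by
  have hbernoulli := one_add_mul_self_le_rpow_one_add (s := 3) (by norm_num) (p := 3 * ℓ - 1)
    (by linarith)
  calc 2 * (1 + ℓ) ≤ 1 + (3 * ℓ - 1) * 3 := by linarith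
    _ ≤ (2 ^ (2 : ℝ)) ^ (3 * ℓ - 1) := hbernoulli.trans_eq (by norm_num)
    _ = 2 ^ (6 * ℓ - 2) := by
        rw [← Real.rpow_mul zero_le_two]
        ring_nf
    _ ≤ (k : ℝ) ^ (6 * ℓ - 2) := by
        gcongr
        · linarith
        · exact Nat.ofNat_le_cast.mpr hk

theorem rpow_mul_rpow_le_exp_half_rpow (hk : 2 ≤ k) (hℓ : 1 ≤ ℓ) :
    (15 * ℓ * k) ^ (k * (k : ℝ) ^ (10 * ℓ)) ≤ Real.exp ((k : ℝ) ^ (16 * ℓ) / 2) := by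
  have hk0 : (0 : ℝ) < k := Nat.cast_pos.mpr (by lia)
  rw [Real.rpow_def_of_pos (by positivity), Real.exp_le_exp]
  calc Real.log (15 * ℓ * k) * (k * (k : ℝ) ^ (10 * ℓ))
      ≤ k * (1 + ℓ) * (k * (k : ℝ) ^ (10 * ℓ)) := by
        gcongr
        exact log_fifteen_mul_mul_le hk hℓ
    _ = 2 * (1 + ℓ) * (k : ℝ) ^ (2 : ℝ) * (k : ℝ) ^ (10 * ℓ) / 2 := by
        rw [Real.rpow_two]
        ring
    _ ≤ (k : ℝ) ^ (6 * ℓ - 2) * (k : ℝ) ^ (2 : ℝ) * (k : ℝ) ^ (10 * ℓ) / 2 := by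
        gcongr
        exact two_mul_one_add_le_rpow hk hℓ
    _ = (k : ℝ) ^ (16 * ℓ) / 2 := by
        rw [← Real.rpow_add hk0, ← Real.rpow_add hk0]
        ring_nf

theorem rankinExponent_rankinParam_le_max (hk : 0 < k) (hℓ : 0 ≤ ℓ) :
    rankinExponent k (rankinParam k ℓ) ≤ max (Ak k) ((k : ℝ) ^ (16 * ℓ)) / 4 := by
  set X := max (Ak k) ((k : ℝ) ^ (16 * ℓ))
  have : 0 ≤ X := le_max_of_le_right (by positivity)
  have hpow : ((k : ℝ) ^ (4 * ℓ)) ^ 4 ≤ X := by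
    rw [← Real.rpow_mul_natCast k.cast_nonneg]
    exact le_max_of_le_right (le_of_eq (by push_cast; ring_nf))
  refine (rankinExponent_rankinParam_le hk hℓ).trans
    ((pow_le_pow_iff_left₀ (by positivity) (by positivity) two_ne_zero).mp ?_)
  calc (14 / 5 * (7 / 2 : ℝ) ^ k * ((k : ℝ) ^ (4 * ℓ)) ^ 2) ^ 2
      = 196 / 25 * ((7 / 2) ^ 2) ^ k * ((k : ℝ) ^ (4 * ℓ)) ^ 4 := by
        rw [← pow_mul, mul_comm 2 k, pow_mul]
        ring
    _ ≤ 1092 / 16 * (125 / 8) ^ k * ((k : ℝ) ^ (4 * ℓ)) ^ 4 := by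
        gcongr ?_ * ?_ ^ k * _ <;> norm_num
    _ = 1092 * (125 / 8) ^ k * ((k : ℝ) ^ (4 * ℓ)) ^ 4 / 16 := by ring
    _ ≤ X * X / 16 := by
        gcongr
        exact (mul_pow_le_Ak hk).trans (le_max_left _ _)
    _ = (X / 4) ^ 2 := by ring

theorem shortSumConstant_one_le_Lam (hℓ : 1 ≤ ℓ) : shortSumConstant 1 ℓ ≤ Lam 1 ℓ := by
  have hℓ0 : 0 ≤ ℓ := by linarith
  have hE : Real.exp (rankinExponent 1 (rankinParam 1 ℓ)) ≤ 60000 := by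
    calc Real.exp (rankinExponent 1 (rankinParam 1 ℓ)) ≤ Real.exp 10 :=
          Real.exp_le_exp.mpr ((rankinExponent_rankinParam_le one_pos hℓ0).trans (by norm_num))
      _ = Real.exp 1 ^ 10 := by rw [← Real.exp_nat_mul]; norm_num
      _ ≤ 3 ^ 10 := by
          gcongr
          linarith [Real.exp_one_lt_d9]
      _ ≤ 60000 := by norm_num
  have hA : Ak 1 = 136500 := by norm_num [Ak]
  have hLam : 9 * ℓ * Ak 1 ^ 2 ≤ Lam 1 ℓ :=
    calc 9 * ℓ * Ak 1 ^ 2 ≤ 9 * ℓ * Dkl 1 ℓ := by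
          gcongr
          exact Ak_sq_le_Dkl one_pos
      _ ≤ 5 * ℓ * Ckl 1 ℓ + 9 * ℓ * Dkl 1 ℓ :=
          le_add_of_nonneg_left (mul_nonneg (by positivity) (Ckl_nonneg one_pos hℓ0))
      _ ≤ Lam 1 ℓ := mul_Ckl_add_mul_Dkl_le_Lam hℓ0
  refine le_trans ?_ hLam
  simp only [shortSumConstant, hA, Nat.cast_one, Real.one_rpow, mul_one, Real.rpow_one]
  nlinarith

theorem two_pow_sixteen_le_rpow (hk : 2 ≤ k) (hℓ : 1 ≤ ℓ) : 2 ^ 16 ≤ (k : ℝ) ^ (16 * ℓ) :=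
  calc (2 ^ 16 : ℝ) = 2 ^ (16 : ℝ) := by norm_num
    _ ≤ (k : ℝ) ^ (16 : ℝ) := by
        gcongr
        exact Nat.ofNat_le_cast.mpr hk
    _ ≤ (k : ℝ) ^ (16 * ℓ) := by
        gcongr
        · exact Nat.one_le_cast.mpr (by lia)
        · linarith

theorem shortSumConstant_le_mul_exp_max (hk : 2 ≤ k) (hℓ : 1 ≤ ℓ) :
    shortSumConstant k ℓ ≤ 5 * ℓ * Real.exp (2 * max (Ak k) ((k : ℝ) ^ (16 * ℓ))) := by
  have hℓ0 : 0 ≤ ℓ := by linarith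
  have hE := rankinExponent_rankinParam_le_max (k := k) (by lia) hℓ0
  set X := max (Ak k) ((k : ℝ) ^ (16 * ℓ))
  have hPX : (k : ℝ) ^ (16 * ℓ) ≤ X := le_max_right _ _
  have hX : 2 ^ 16 ≤ X := (two_pow_sixteen_le_rpow hk hℓ).trans hPX
  have hpow : ∀ c ≤ 16, (k : ℝ) ^ (c * ℓ) ≤ X := fun c hc => hPX.trans' <|
    Real.rpow_le_rpow_of_exponent_le (Nat.one_le_cast.mpr (by lia)) (by gcongr)
  have hquadratic : 750 * X ≤ Real.exp (X / 2) := by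
    have := Real.quadratic_le_exp_of_nonneg (show 0 ≤ X / 2 by linarith)
    nlinarith
  have hmul : Real.exp (X / 2) * Real.exp (X / 4) ≤ Real.exp (2 * X) := by
    rw [← Real.exp_add]
    gcongr
    linarith
  have hhalf : Real.exp (X / 2) ≤ Real.exp (2 * X) := by
    gcongr
    linarith
  have hone : 1 ≤ ℓ * Real.exp (2 * X) :=
    one_le_mul_of_one_le_of_one_le hℓ (Real.one_le_exp (by linarith))
  calc shortSumConstant k ℓ
      ≤ 1 + 60 * ℓ * X + 750 * ℓ * X * Real.exp (X / 4) +
        2 * Real.exp (X / 2) * Real.exp (X / 4) := by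
        rw [shortSumConstant]
        gcongr
        · exact hpow 4 (by norm_num)
        · exact hpow 2 (by norm_num)
        · exact (rpow_mul_rpow_le_exp_half_rpow hk hℓ).trans (by gcongr)
    _ = 1 + ℓ * (60 * X) + ℓ * (750 * X * Real.exp (X / 4)) +
        2 * 1 * (Real.exp (X / 2) * Real.exp (X / 4)) := by ring
    _ ≤ ℓ * Real.exp (2 * X) + ℓ * Real.exp (2 * X) + ℓ * Real.exp (2 * X) +
        2 * ℓ * Real.exp (2 * X) := by
        gcongr
        · linarith
        · exact hmul.trans' (by gcongr)
    _ = 5 * ℓ * Real.exp (2 * X) := by ring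

theorem shortSumConstant_le_Lam (hk : 0 < k) (hℓ : 1 ≤ ℓ) : shortSumConstant k ℓ ≤ Lam k ℓ := by
  rcases (Nat.succ_le_iff.mpr hk).eq_or_lt with rfl | hk2
  · exact shortSumConstant_one_le_Lam hℓ
  · exact (shortSumConstant_le_mul_exp_max hk2 hℓ).trans (mul_exp_max_le_Lam hk2 hℓ)

theorem mul_sq_le_mul_rpow_log (hℓ : 1 ≤ ℓ) :
    6400 * ℓ ^ 2 ≤
      7 ^ 28 * (12 * Real.exp 1 * ℓ) ^ (28 * Real.log (192 * Real.exp 1 * ℓ)) := by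
  have he : 1 ≤ Real.exp 1 := Real.one_le_exp zero_le_one
  have hbase : ℓ ≤ 12 * Real.exp 1 * ℓ := le_mul_of_one_le_left (by linarith) (by linarith)
  have hlog : 1 ≤ Real.log (192 * Real.exp 1 * ℓ) := by
    rw [Real.le_log_iff_exp_le (by positivity)]
    nlinarith
  calc 6400 * ℓ ^ 2 ≤ 7 ^ 28 * ℓ ^ (2 : ℝ) := by
        rw [Real.rpow_two]
        gcongr
        norm_num
    _ ≤ 7 ^ 28 * (12 * Real.exp 1 * ℓ) ^ (2 : ℝ) := by gcongr
    _ ≤ _ := by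
        gcongr <;> linarith

end Constants

theorem statement_0_general (ℓ : ℝ) (hℓ : 1 ≤ ℓ) (k : ℕ) (hk : 0 < k)
    (f : ℕ → ℝ) (hf : ∀ n : ℕ, 1 ≤ n → 0 ≤ f n)
    (hsub : ∀ m n : ℕ, 1 ≤ m → 1 ≤ n → f (m * n) ≤ (piltz k m : ℝ) * f n)
    (x y : ℝ) (hx : Real.exp (6400 * ℓ ^ 2) ≤ x)
    (hy1 : x ^ (1 / ℓ) ≤ y) (hy2 : y ≤ x) :
    ∑ n ∈ (Finset.Icc 1 ⌊x⌋₊).filter (fun n : ℕ => x - y < (n : ℝ)), f n ≤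
      Lam k ℓ * (y / Real.log x) * ∑ n ∈ Finset.Icc 1 ⌊x⌋₊, f n / n := by
  have hf' : IsPiltzDominated k f := ⟨hf, hsub⟩
  have hx1 : 1 ≤ x := (Real.one_le_exp (by positivity)).trans hx
  have hlogx : 0 ≤ Real.log x := Real.log_nonneg hx1
  have hy : 0 ≤ y := (Real.rpow_nonneg (by linarith) _).trans hy1
  have hsum : 0 ≤ ∑ n ∈ Finset.Icc 1 ⌊x⌋₊, f n / n := hf'.sum_div_nonneg ⌊x⌋₊
  rw [filter_sub_lt_Icc_floor]
  exact (hf'.sum_Ioc_floor_sub_le hk hℓ hx hy1 hy2).trans <| mul_le_mul_of_nonneg_right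
    (mul_le_mul_of_nonneg_right (shortSumConstant_le_Lam hk hℓ) (div_nonneg hy hlogx)) hsum

/-- Main Theorem: explicit bound for short sums of arithmetic functions `f`
satisfying `f (m n) ≤ τ_k (m) f (n)`. -/
theorem statement_0 (ℓ : ℝ) (hℓ : 1 ≤ ℓ) (k : ℕ) (hk : 0 < k)
    (f : ℕ → ℝ) (hf : ∀ n : ℕ, 1 ≤ n → 0 ≤ f n)
    (hsub : ∀ m n : ℕ, 1 ≤ m → 1 ≤ n → f (m * n) ≤ (piltz k m : ℝ) * f n)
    (x y : ℝ)
    (hx : Real.exp (7 ^ 28 * (12 * Real.exp 1 * ℓ) ^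
            (28 * Real.log (192 * Real.exp 1 * ℓ))) ≤ x)
    (hy1 : x ^ (1 / ℓ) ≤ y) (hy2 : y ≤ x) :
    ∑ n ∈ (Finset.Icc 1 ⌊x⌋₊).filter (fun n : ℕ => x - y < (n : ℝ)), f n ≤
      Lam k ℓ * (y / Real.log x) * ∑ n ∈ Finset.Icc 1 ⌊x⌋₊, f n / n :=
  statement_0_general ℓ hℓ k hk f hf hsub x y
    ((Real.exp_le_exp.mpr (mul_sq_le_mul_rpow_log hℓ)).trans hx) hy1 hy2
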